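/- Let K be a number field, S a finite set of places of K containing all the archimedean ones, and φ an endomorphism of ℙ¹ defined over K of degree d ≥ 2 with good reduction outside S. Then the number of K-rational preperiodic points of φ satisfies |PrePer(φ,K)| ≤ max{ T(|S|) + CV(d,|S|), 3·L₁(d,|S|) + 3 }, where T(s) = 12·7^{4s}, CV(d,s) = (3B(s)+13)d + 27B(s) + C(5,s) + 6C(3,s) + 32, L₁(d,s) = (d−1)(1 + d(1 + B(s))), B(s) = 2^{16s} and C(n,s) = e^{(6n)^{3n}(ns+1−n)}. In particular |PrePer(φ,K)| is bounded by a quadratic polynomial in d whose coefficients depend only on |S|. -/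

import Mathlib

open NumberField IsDedekindDomain MvPolynomial
open scoped Classical nonZeroDivisors

set_option synthInstance.maxHeartbeats 1000000
set_option maxHeartbeats 1000000

noncomputable section

/-- The projective line over `K`. -/
abbrev P1 (K : Type*) [Field K] := Projectivization K (Fin 2 → K)

variable {K : Type*} [Field K] [NumberField K]

/-- The additive `v`-adic valuation (order) of `x ∈ K`, with junk value `0` at `x = 0`,
normalized so that it is surjective onto `ℤ`. -/
def ordAt (v : HeightOneSpectrum (𝓞 K)) (x : K) : ℤ :=
  if hx : x = 0 then 0
  else - Multiplicative.toAdd (WithZero.unzero ((v.valuation K).ne_zero_iff.mpr hx))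

/-- `min (v(x), v(y))` for a pair of coordinates, not both zero. -/
def minOrd (v : HeightOneSpectrum (𝓞 K)) (x y : K) : ℤ :=
  if x = 0 then ordAt v y else if y = 0 then ordAt v x else min (ordAt v x) (ordAt v y)

/-- The `v`-adic logarithmic distance between two points of `ℙ¹(K)`:
`δ_v(P,Q) = v(x₁y₂ - x₂y₁) - min(v x₁, v y₁) - min(v x₂, v y₂)`, with value `⊤` when `P = Q`
(it is independent of the choice of homogeneous coordinates, so we compute it on the chosen
representatives). -/
def logDist (v : HeightOneSpectrum (𝓞 K)) (P Q : P1 K) : WithTop ℤ :=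
  if P = Q then ⊤
  else ((ordAt v (P.rep 0 * Q.rep 1 - P.rep 1 * Q.rep 0)
        - minOrd v (P.rep 0) (P.rep 1) - minOrd v (Q.rep 0) (Q.rep 1) : ℤ) : WithTop ℤ)

/-- An endomorphism of `ℙ¹` of degree `d` defined over `K`, given by a pair of homogeneous
forms of degree `d` with no common zero over the algebraic closure, together with the induced
self-map of `ℙ¹(K)`. -/
structure P1Map (K : Type*) [Field K] (d : ℕ) where
  toFun : P1 K → P1 K
  F : MvPolynomial (Fin 2) K
  G : MvPolynomial (Fin 2) K
  homF : F.IsHomogeneous d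
  homG : G.IsHomogeneous d
  coprime : ∀ x y : AlgebraicClosure K,
    aeval ![x, y] F = 0 → aeval ![x, y] G = 0 → x = 0 ∧ y = 0
  compat : ∀ (x y : K) (hxy : ![x, y] ≠ 0)
    (h : ![eval ![x, y] F, eval ![x, y] G] ≠ 0),
    toFun (Projectivization.mk K ![x, y] hxy) =
      Projectivization.mk K ![eval ![x, y] F, eval ![x, y] G] h

variable {d : ℕ}

/-- `φ` has good reduction at the finite place `v`: some representing pair of forms has
coefficients in the valuation ring at `v`, not all in the maximal ideal, and the reductions
of the two forms modulo `v` have no common zero in `ℙ¹` of the algebraic closure of the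
residue field. -/
def GoodReductionAt (φ : P1Map K d) (v : HeightOneSpectrum (𝓞 K)) : Prop :=
  ∃ c : K, c ≠ 0 ∧
    ∃ F₀ G₀ : MvPolynomial (Fin 2) (v.valuation (K := K)).valuationSubring,
      MvPolynomial.map ((v.valuation (K := K)).valuationSubring.subtype) F₀ = C c * φ.F ∧
      MvPolynomial.map ((v.valuation (K := K)).valuationSubring.subtype) G₀ = C c * φ.G ∧
      ((∃ m, F₀.coeff m ∉ IsLocalRing.maximalIdeal (v.valuation (K := K)).valuationSubring) ∨
        (∃ m, G₀.coeff m ∉ IsLocalRing.maximalIdeal (v.valuation (K := K)).valuationSubring)) ∧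
      ∀ x y : AlgebraicClosure
          (IsLocalRing.ResidueField (v.valuation (K := K)).valuationSubring),
        eval ![x, y] (MvPolynomial.map
          ((algebraMap (IsLocalRing.ResidueField (v.valuation (K := K)).valuationSubring)
              (AlgebraicClosure _)).comp
            (IsLocalRing.residue _)) F₀) = 0 →
        eval ![x, y] (MvPolynomial.map
          ((algebraMap (IsLocalRing.ResidueField (v.valuation (K := K)).valuationSubring)
              (AlgebraicClosure _)).comp
            (IsLocalRing.residue _)) G₀) = 0 →
        x = 0 ∧ y = 0

/-- `φ` has good reduction outside `S`, where `S` consists of all archimedean places together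
with the finite places in `T`. -/
def GoodReductionOutside (φ : P1Map K d) (T : Finset (HeightOneSpectrum (𝓞 K))) : Prop :=
  ∀ v ∉ T, GoodReductionAt φ v

/-- `P` is a periodic point of `φ`. -/
def IsPeriodicPoint (φ : P1Map K d) (P : P1 K) : Prop :=
  ∃ n, 0 < n ∧ φ.toFun^[n] P = P

/-- `P` is a preperiodic point of `φ`. -/
def IsPreperiodicPoint (φ : P1Map K d) (P : P1 K) : Prop :=
  ∃ m, IsPeriodicPoint φ (φ.toFun^[m] P)

/-- `P` is a tail point of `φ`: preperiodic but not periodic. -/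
def IsTailPoint (φ : P1Map K d) (P : P1 K) : Prop :=
  IsPreperiodicPoint φ P ∧ ¬ IsPeriodicPoint φ P

/-- The set `Tail(φ,K,P)` of `K`-rational tail points of `P`: non-periodic points having `P`
in their forward orbit. -/
def TailOf (φ : P1Map K d) (P : P1 K) : Set (P1 K) :=
  {Q | ¬ IsPeriodicPoint φ Q ∧ ∃ n, φ.toFun^[n] Q = P}

/-- `P = [a:b]` is a critical point of `φ = [F:G]`: the algebraic condition
`φ([x:y]) = φ([a:b])`, i.e. the form `G(a,b)·F(X,Y) - F(a,b)·G(X,Y)`, vanishes to order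
at least `2` at `[a:b]`. -/
def IsCriticalPt (φ : P1Map K d) (P : P1 K) : Prop :=
  ∃ (a b : K) (hab : ![a, b] ≠ 0), P = Projectivization.mk K ![a, b] hab ∧
    (C b * X 0 - C a * X 1) ^ 2 ∣
      (C (eval ![a, b] φ.G) * φ.F - C (eval ![a, b] φ.F) * φ.G)

/-- `P` belongs to a critical cycle of `φ`: it lies in the orbit of a critical periodic
point. -/
def InCriticalCycle (φ : P1Map K d) (P : P1 K) : Prop :=
  ∃ Q, IsCriticalPt φ Q ∧ IsPeriodicPoint φ Q ∧ ∃ n, φ.toFun^[n] Q = P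

/-- The cardinality `|S|` of the set of places `S` consisting of all archimedean places
together with the finite places in `T`. -/
def sCard (K : Type*) [Field K] [NumberField K] (T : Finset (HeightOneSpectrum (𝓞 K))) : ℕ :=
  T.card + Fintype.card (InfinitePlace K)

/-- `B(s) = 2^{16 s}`. -/
def Bconst (s : ℕ) : ℕ := 2 ^ (16 * s)

/-- `C(n,s) = e^{(6n)^{3n} (n s + 1 - n)}`. -/
def Cconst (n s : ℕ) : ℝ := Real.exp ((6 * n : ℝ) ^ (3 * n) * (n * s + 1 - n))

/-- `CV(d,s) = (3B(s)+13)d + 27B(s) + C(5,s) + 6C(3,s) + 32`. -/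
def CVconst (d s : ℕ) : ℝ :=
  (3 * (Bconst s : ℝ) + 13) * d + 27 * (Bconst s : ℝ) + Cconst 5 s + 6 * Cconst 3 s + 32

/-- `L₁(d,s) = (d-1)(1 + d(1 + B(s)))`. -/
def L1const (d s : ℕ) : ℕ := (d - 1) * (1 + d * (1 + Bconst s))

/-- `L₂(d,s) = max{(2(C(3,s)+2)+1)d + 1, (d-1)(1 + B(s)(B(s) + C(3,s) + 3))}`. -/
def L2const (d s : ℕ) : ℝ :=
  max ((2 * (Cconst 3 s + 2) + 1) * d + 1)
    (((d : ℝ) - 1) * (1 + (Bconst s : ℝ) * ((Bconst s : ℝ) + Cconst 3 s + 3)))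

/-- `L₃(d,s) = ((1 + 3B(s))B(s) + 1)(d-1)`. -/
def L3const (d s : ℕ) : ℕ := ((1 + 3 * Bconst s) * Bconst s + 1) * (d - 1)

/-- `L₄(d,s) = (C(3,s) + 3)(d-1)`. -/
def L4const (d s : ℕ) : ℝ := (Cconst 3 s + 3) * ((d : ℝ) - 1)

end


set_option linter.unusedSectionVars false

/-- The wedge (determinant) of two vectors. -/
def wdg {K : Type*} [Field K] (u w : Fin 2 → K) : K := u 0 * w 1 - u 1 * w 0

/-- The separation condition produced at each place of `S`. -/
def Gauged {K ι : Type*} [Field K] (f : AbsoluteValue K ℝ) (θ : ℝ) (vec : ι → Fin 2 → K)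
    (A B : Finset ι) : Prop :=
  ∃ (N : (Fin 2 → K) → ℝ) (r : ℝ), 0 < r ∧ (∀ u, u ≠ 0 → 0 < N u) ∧
    (∀ α u, N (α • u) = f α * N u) ∧ (∀ u w, N (u + w) ≤ 2 * max (N u) (N w)) ∧
    (∀ u w, r * f (wdg u w) ≤ 2 * N u * N w) ∧
    (∀ a ∈ A, ∀ b ∈ B, N (vec a) * N (vec b) ≤ 2 * r * f (wdg (vec a) (vec b))) ∧
    (∀ a ∈ A, ∀ a' ∈ A, ∀ b ∈ B, ∀ b' ∈ B,
      f (wdg (vec a) (vec a')) * f (wdg (vec b) (vec b')) ≤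
        θ * (f (wdg (vec a) (vec b)) * f (wdg (vec a') (vec b'))))

lemma Gauged.mono {K ι : Type*} [Field K] {f : AbsoluteValue K ℝ} {θ : ℝ} {vec : ι → Fin 2 → K}
    {A B A' B' : Finset ι} (h : Gauged f θ vec A B) (hA : A' ⊆ A) (hB : B' ⊆ B) :
    Gauged f θ vec A' B' := by
  obtain ⟨N, r, h1, h2, h3, h4, h5, h6, h7⟩ := h
  exact ⟨N, r, h1, h2, h3, h4, h5, fun a ha b hb => h6 a (hA ha) b (hB hb),
    fun a ha a' ha' b hb b' hb' => h7 a (hA ha) a' (hA ha') b (hB hb) b' (hB hb')⟩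

lemma gauge_of {K ι : Type*} [Field K] (f : AbsoluteValue K ℝ) (θ : ℝ) (vec : ι → Fin 2 → K)
    (x : ι → K) (A B : Finset ι) (hA : ∀ i ∈ A, vec i 0 = vec i 1 * x i)
    (hB : ∀ i ∈ B, vec i 0 = vec i 1 * x i)
    (c : K) (r : ℝ) (hr : 0 < r)
    (h1 : ∀ a ∈ A, ∀ b ∈ B, max (f (x a - c)) r * max (f (x b - c)) r ≤ 2 * r * f (x a - x b))
    (h2 : ∀ a ∈ A, ∀ a' ∈ A, ∀ b ∈ B, ∀ b' ∈ B, f (x a - x a') * f (x b - x b') ≤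
        θ * (f (x a - x b) * f (x a' - x b'))) : Gauged f θ vec A B := by
  have key : ∀ i j, vec i 0 = vec i 1 * x i → vec j 0 = vec j 1 * x j →
      f (wdg (vec i) (vec j)) = f (vec i 1) * f (vec j 1) * f (x i - x j) := by
    intro i j hi hj
    rw [← map_mul, ← map_mul]; congr 1; rw [wdg, hi, hj]; ring
  have key2 : ∀ i, vec i 0 = vec i 1 * x i →
      max (f (vec i 0 - c * vec i 1)) (r * f (vec i 1)) = f (vec i 1) * max (f (x i - c)) r := by
    intro i hi
    rw [mul_max_of_nonneg _ _ (f.nonneg _), ← map_mul, mul_comm r]; congr 2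
    rw [hi]; ring
  refine ⟨fun u => max (f (u 0 - c * u 1)) (r * f (u 1)), r, hr, ?_, ?_, ?_, ?_, ?_, ?_⟩
  · intro u hu
    by_cases h : u 1 = 0
    · refine lt_max_of_lt_left (f.pos ?_)
      intro h0
      apply hu
      ext i
      fin_cases i
      · simpa [h] using h0
      · simpa using h
    · exact lt_max_of_lt_right (mul_pos hr (f.pos h))
  · intro α u
    have e1 : f ((α • u) 0 - c * (α • u) 1) = f α * f (u 0 - c * u 1) := by
      rw [← map_mul]; congr 1; simp only [Pi.smul_apply, smul_eq_mul]; ring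
    have e2 : r * f ((α • u) 1) = f α * (r * f (u 1)) := by
      simp only [Pi.smul_apply, smul_eq_mul, map_mul]; ring
    simp only [e1, e2]
    rw [mul_max_of_nonneg _ _ (f.nonneg _)]
  · intro u w
    have e1 : f ((u + w) 0 - c * (u + w) 1) ≤ f (u 0 - c * u 1) + f (w 0 - c * w 1) := by
      refine le_trans (le_of_eq ?_) (f.add_le _ _); congr 1; simp; ring
    have e2 : f ((u + w) 1) ≤ f (u 1) + f (w 1) := f.add_le _ _
    have e3 := mul_le_mul_of_nonneg_left e2 hr.le
    simp only
    set a := f (u 0 - c * u 1)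
    set b := r * f (u 1) with hb
    set a' := f (w 0 - c * w 1)
    set b' := r * f (w 1) with hb'
    have i1 := le_max_left (max a b) (max a' b')
    have i2 := le_max_right (max a b) (max a' b')
    have i3 := le_max_left a b
    have i4 := le_max_right a b
    have i5 := le_max_left a' b'
    have i6 := le_max_right a' b'
    apply max_le <;> linarith
  · intro u w
    have e1 : f (wdg u w) ≤ f (u 0 - c * u 1) * f (w 1) + f (w 0 - c * w 1) * f (u 1) := by
      have : wdg u w = (u 0 - c * u 1) * w 1 + -((w 0 - c * w 1) * u 1) := by rw [wdg]; ring
      rw [this]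
      refine (f.add_le _ _).trans (le_of_eq ?_)
      rw [f.map_neg, map_mul, map_mul]
    simp only
    have a0 := f.nonneg (u 0 - c * u 1)
    have a0' := f.nonneg (w 0 - c * w 1)
    have b0 := mul_nonneg hr.le (f.nonneg (u 1))
    have b0' := mul_nonneg hr.le (f.nonneg (w 1))
    have i3 := le_max_left (f (u 0 - c * u 1)) (r * f (u 1))
    have i4 := le_max_right (f (u 0 - c * u 1)) (r * f (u 1))
    have i5 := le_max_left (f (w 0 - c * w 1)) (r * f (w 1))
    have i6 := le_max_right (f (w 0 - c * w 1)) (r * f (w 1))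
    have j1 := mul_le_mul i3 i6 b0' (a0.trans i3)
    have j2 := mul_le_mul i5 i4 b0 (a0'.trans i5)
    nlinarith [mul_le_mul_of_nonneg_left e1 hr.le]
  · intro a ha b hb
    simp only
    rw [key2 a (hA a ha), key2 b (hB b hb), key a b (hA a ha) (hB b hb)]
    have := h1 a ha b hb
    have h0 := mul_nonneg (f.nonneg (vec a 1)) (f.nonneg (vec b 1))
    nlinarith [mul_le_mul_of_nonneg_left this h0]
  · intro a ha a' ha' b hb b' hb'
    rw [key _ _ (hA a ha) (hA a' ha'), key _ _ (hB b hb) (hB b' hb'),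
      key _ _ (hA a ha) (hB b hb), key _ _ (hA a' ha') (hB b' hb')]
    have := h2 a ha a' ha' b hb b' hb'
    have h0 := mul_nonneg (mul_nonneg (f.nonneg (vec a 1)) (f.nonneg (vec b 1)))
      (mul_nonneg (f.nonneg (vec a' 1)) (f.nonneg (vec b' 1)))
    nlinarith [mul_le_mul_of_nonneg_left this h0]

/-- Combinatorial splitting lemma. -/
lemma comb_split {ι β : Type*} (br : ι → β) (A B : Finset ι)
    (hfib : ∀ t, ∀ E ⊆ A, (∀ a ∈ E, br a = t) → 2 * E.card ≤ A.card) :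
    ∃ A' ⊆ A, ∃ B' ⊆ B, A.card ≤ 4 * A'.card ∧ B.card ≤ 2 * B'.card ∧
      ∀ a ∈ A', ∀ b ∈ B', br a ≠ br b := by
  have hex : ∃ G : Finset β, A.card ≤ 4 * (A.filter (fun a => br a ∈ G)).card ∧
      4 * (A.filter (fun a => br a ∈ G)).card ≤ 3 * A.card := by
    let Q : Finset (Finset β) := (A.image br).powerset.filter
      (fun G => A.card ≤ 4 * (A.filter (fun a => br a ∈ G)).card)
    have hQ : Q.Nonempty := by
      refine ⟨A.image br, ?_⟩
      simp only [Q, Finset.mem_filter, Finset.mem_powerset, subset_refl, true_and]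
      rw [Finset.filter_true_of_mem (fun a ha => Finset.mem_image_of_mem _ ha)]
      omega
    obtain ⟨G, hG, hmin⟩ := Finset.exists_min_image Q Finset.card hQ
    have hG' := hG
    simp only [Q, Finset.mem_filter, Finset.mem_powerset] at hG'
    refine ⟨G, hG'.2, ?_⟩
    rcases G.eq_empty_or_nonempty with h | ⟨g, hg⟩
    · subst h; simp
    · have h1 : ¬ A.card ≤ 4 * (A.filter (fun a => br a ∈ G.erase g)).card := by
        intro hc
        have := hmin (G.erase g) (by
          simp only [Q, Finset.mem_filter, Finset.mem_powerset]
          exact ⟨(Finset.erase_subset _ _).trans hG'.1, hc⟩)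
        have h2 := Finset.card_erase_lt_of_mem hg
        omega
      have h2 : (A.filter (fun a => br a ∈ G)).card ≤
          (A.filter (fun a => br a ∈ G.erase g)).card + (A.filter (fun a => br a = g)).card := by
        refine le_trans (Finset.card_le_card ?_) (Finset.card_union_le _ _)
        intro a ha
        simp only [Finset.mem_filter, Finset.mem_union, Finset.mem_erase] at ha ⊢
        by_cases h : br a = g
        · exact Or.inr ⟨ha.1, h⟩
        · exact Or.inl ⟨ha.1, h, ha.2⟩
      have := hfib g _ (Finset.filter_subset (fun a => br a = g) A)
        (fun a ha => (Finset.mem_filter.1 ha).2)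
      omega
  obtain ⟨G, h1, h2⟩ := hex
  have hB := Finset.card_filter_add_card_filter_not (s := B) (fun b => br b ∈ G)
  have hA := Finset.card_filter_add_card_filter_not (s := A) (fun b => br b ∈ G)
  by_cases h : B.card ≤ 2 * (B.filter (fun b => br b ∈ G)).card
  · refine ⟨A.filter (fun a => ¬ br a ∈ G), Finset.filter_subset _ _,
      B.filter (fun a => br a ∈ G), Finset.filter_subset _ _, by omega, h, ?_⟩
    intro a ha b hb hab
    simp only [Finset.mem_filter] at ha hb
    exact ha.2 (hab ▸ hb.2)
  · refine ⟨A.filter (fun a => br a ∈ G), Finset.filter_subset _ _,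
      B.filter (fun a => ¬ br a ∈ G), Finset.filter_subset _ _, by omega, by omega, ?_⟩
    intro a ha b hb hab
    simp only [Finset.mem_filter] at ha hb
    exact hb.2 (hab ▸ ha.2)

/-- Minimal disc containing at least a fraction `1/M` of the points. -/
lemma min_disc {K ι : Type*} [Field K] (f : AbsoluteValue K ℝ) (x : ι → K) (A : Finset ι)
    (M : ℕ) (hM : 1 ≤ M) (hinj : Set.InjOn x A) (hcard : M < A.card) :
    ∃ (c : K) (r : ℝ), 0 < r ∧ A.card ≤ M * (A.filter (fun t => f (x t - c) ≤ r)).card ∧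
      ∀ E ⊆ A, (∀ t ∈ E, ∀ t' ∈ E, f (x t - x t') < r) → M * E.card < A.card := by
  let Q : Finset (ι × ι) := (A ×ˢ A).filter
    (fun p => A.card ≤ M * (A.filter (fun t => f (x t - x p.1) ≤ f (x p.2 - x p.1))).card)
  have hfar : ∀ E ⊆ A, A.card ≤ M * E.card → ∃ p ∈ Q, p.1 ∈ E ∧ p.2 ∈ E := by
    intro E hE hc
    have hne : E.Nonempty := by
      rw [← Finset.card_pos]; by_contra h0
      have : E.card = 0 := by omega
      rw [this] at hc; omega
    obtain ⟨i, hi⟩ := hne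
    obtain ⟨j, hj, hjm⟩ := Finset.exists_max_image E (fun t => f (x t - x i)) ⟨i, hi⟩
    refine ⟨(i, j), ?_, hi, hj⟩
    simp only [Q, Finset.mem_filter, Finset.mem_product]
    refine ⟨⟨hE hi, hE hj⟩, hc.trans (Nat.mul_le_mul_left _ (Finset.card_le_card ?_))⟩
    intro t ht
    exact Finset.mem_filter.2 ⟨hE ht, hjm t ht⟩
  have hQ : Q.Nonempty := by
    obtain ⟨p, hp, -⟩ := hfar A subset_rfl (Nat.le_mul_of_pos_left _ hM)
    exact ⟨p, hp⟩
  obtain ⟨p, hp, hmin⟩ := Finset.exists_min_image Q (fun p => f (x p.2 - x p.1)) hQ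
  have hp' := hp
  simp only [Q, Finset.mem_filter, Finset.mem_product] at hp'
  refine ⟨x p.1, f (x p.2 - x p.1), ?_, hp'.2, ?_⟩
  · refine lt_of_le_of_ne (f.nonneg _) ?_
    intro h0
    have h1 : (A.filter (fun t => f (x t - x p.1) ≤ f (x p.2 - x p.1))).card ≤ 1 := by
      rw [Finset.card_le_one]
      intro a ha b hb
      simp only [Finset.mem_filter, ← h0] at ha hb
      have ea := (f.eq_zero).1 (le_antisymm ha.2 (f.nonneg _))
      have eb := (f.eq_zero).1 (le_antisymm hb.2 (f.nonneg _))
      exact hinj ha.1 hb.1 ((sub_eq_zero.1 ea).trans (sub_eq_zero.1 eb).symm)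
    have := Nat.mul_le_mul_left M h1
    omega
  · intro E hE hlt
    by_contra hc
    obtain ⟨q, hq, hq1, hq2⟩ := hfar E hE (not_lt.1 hc)
    exact absurd (hmin q hq) (not_le.2 (hlt _ hq2 _ hq1))

lemma sel_nonarch {K ι : Type*} [Field K] (f : AbsoluteValue K ℝ)
    (hf : ∀ x y, f (x + y) ≤ max (f x) (f y)) (vec : ι → Fin 2 → K)
    (x : ι → K) (A B : Finset ι) (hA : ∀ i ∈ A, vec i 0 = vec i 1 * x i)
    (hB : ∀ i ∈ B, vec i 0 = vec i 1 * x i) (hinj : Set.InjOn x A) (hcard : 2 < A.card) :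
    ∃ A' ⊆ A, ∃ B' ⊆ B, A.card ≤ 4 * A'.card ∧ B.card ≤ 2 * B'.card ∧
      Gauged f 1 vec A' B' := by
  obtain ⟨c, r, hr, hc, hE⟩ := min_disc f x A 2 (by norm_num) hinj hcard
  have hsub : ∀ x y, f (x - y) ≤ max (f x) (f y) := by
    intro x y
    rw [sub_eq_add_neg]
    have := hf x (-y)
    rwa [f.map_neg] at this
  have hcomm : ∀ x y, f (x - y) = f (y - x) := fun x y => f.map_sub x y
  have htri : ∀ a b c, f (a - c) ≤ max (f (a - b)) (f (b - c)) := by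
    intro a b c
    have := hf (a - b) (b - c)
    rwa [sub_add_sub_cancel] at this
  let br : ι → Option (Set K) := fun t =>
    if f (x t - c) ≤ r then some {z | f (z - x t) < r} else none
  obtain ⟨A', hA', B', hB', h1, h2, h3⟩ := comb_split br A B (by
    intro t E hEA hEt
    rcases t with _ | U
    · have : E ⊆ A.filter (fun a => ¬ f (x a - c) ≤ r) := by
        intro a ha
        refine Finset.mem_filter.2 ⟨hEA ha, fun h => ?_⟩
        have := hEt a ha
        simp [br, h] at this
      have h2 := Finset.card_le_card this
      have := Finset.card_filter_add_card_filter_not (s := A) (fun a => f (x a - c) ≤ r)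
      omega
    · apply le_of_lt
      apply hE _ hEA
      intro t ht t' ht'
      have e1 : U = {z | f (z - x t') < r} := by
        have := hEt _ ht'; simp only [br] at this; split_ifs at this; simpa using this.symm
      have e2 : U = {z | f (z - x t) < r} := by
        have := hEt _ ht; simp only [br] at this; split_ifs at this; simpa using this.symm
      have : x t ∈ U := by rw [e2]; simpa using hr
      rw [e1] at this
      exact this)
  refine ⟨A', hA', B', hB', h1, h2, ?_⟩
  have hkey : ∀ a ∈ A', ∀ b ∈ B', max (f (x a - c)) r * max (f (x b - c)) r ≤
      r * f (x a - x b) := by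
    intro a ha b hb
    have hne := h3 a ha b hb
    by_cases ca : f (x a - c) ≤ r <;> by_cases cb : f (x b - c) ≤ r
    · rw [max_eq_right ca, max_eq_right cb]
      apply mul_le_mul_of_nonneg_left _ hr.le
      by_contra hlt
      push Not at hlt
      apply hne
      simp only [br, ca, cb, if_true]
      congr 1
      ext z
      simp only [Set.mem_ofPred_eq]
      constructor
      · intro hz
        exact (htri z (x a) (x b)).trans_lt (max_lt hz hlt)
      · intro hz
        exact (htri z (x b) (x a)).trans_lt (max_lt hz (by rwa [hcomm]))
    · push Not at cb
      rw [max_eq_right ca, max_eq_left cb.le]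
      apply mul_le_mul_of_nonneg_left _ hr.le
      have := htri (x b) (x a) c
      rw [hcomm (x b) (x a)] at this
      rcases le_max_iff.1 this with h | h
      · exact h
      · linarith
    · push Not at ca
      rw [max_eq_right cb, max_eq_left ca.le, mul_comm]
      apply mul_le_mul_of_nonneg_left _ hr.le
      have := htri (x a) (x b) c
      rcases le_max_iff.1 this with h | h
      · exact h
      · linarith
    · exfalso; apply hne; simp only [br, ca, cb, if_false]
  have hup : ∀ y z, r * f (y - z) ≤ max (f (y - c)) r * max (f (z - c)) r := by
    intro y z
    have h := htri y c z
    rw [hcomm c z] at h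
    have l1 := le_max_left (f (y - c)) r
    have l2 := le_max_right (f (y - c)) r
    have l3 := le_max_left (f (z - c)) r
    have l4 := le_max_right (f (z - c)) r
    have p1 := f.nonneg (y - c)
    have p2 := f.nonneg (z - c)
    rcases le_max_iff.1 h with h | h
    · calc r * f (y - z) ≤ r * f (y - c) := mul_le_mul_of_nonneg_left h hr.le
        _ = f (y - c) * r := mul_comm _ _
        _ ≤ _ := mul_le_mul l1 l4 hr.le (p1.trans l1)
    · calc r * f (y - z) ≤ r * f (z - c) := mul_le_mul_of_nonneg_left h hr.le
        _ ≤ _ := mul_le_mul l2 l3 p2 (hr.le.trans l2)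
  refine gauge_of f 1 vec x A' B' (fun i hi => hA i (hA' hi)) (fun i hi => hB i (hB' hi)) c r hr
    ?_ ?_
  · intro a ha b hb
    have := hkey a ha b hb
    have := mul_nonneg hr.le (f.nonneg (x a - x b))
    linarith
  · intro a ha a' ha' b hb b' hb'
    have k1 := hkey a ha b hb
    have k2 := hkey a' ha' b' hb'
    have u1 := hup (x a) (x a')
    have u2 := hup (x b) (x b')
    have q1 := mul_nonneg hr.le (f.nonneg (x a - x a'))
    have q2 := mul_nonneg hr.le (f.nonneg (x b - x b'))
    have m1 := mul_le_mul u1 u2 q2 (q1.trans u1)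
    have N0 : ∀ y, 0 ≤ max (f (y - c)) r := fun y => hr.le.trans (le_max_right _ _)
    have m2 := mul_le_mul k1 k2 (mul_nonneg (N0 _) (N0 _)) (mul_nonneg hr.le (f.nonneg _))
    have : (r * r) * (f (x a - x a') * f (x b - x b')) ≤
        (r * r) * (f (x a - x b) * f (x a' - x b')) := by
      nlinarith
    rw [one_mul]
    exact le_of_mul_le_mul_left this (mul_pos hr hr)

lemma arch_pair {K : Type*} [Field K] (f : AbsoluteValue K ℝ) (c u v : K) (R : ℝ) (hR : 0 < R)
    (hu : f (u - c) ≤ R) (hv : 20 * R ≤ f (v - c)) :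
    f (v - c) ≤ (20 / 19) * f (u - v) ∧
    max (f (u - c)) R * max (f (v - c)) R ≤ 2 * R * f (u - v) := by
  have h1 : f (v - c) ≤ f (u - v) + f (u - c) := by
    have := f.add_le (v - u) (u - c)
    rwa [sub_add_sub_cancel, f.map_sub v u] at this
  have h2 : f (v - c) ≤ (20 / 19) * f (u - v) := by linarith
  refine ⟨h2, ?_⟩
  rw [max_eq_right hu, max_eq_left (by linarith)]
  nlinarith [f.nonneg (u - v)]

lemma arch_cross {K : Type*} [Field K] (f : AbsoluteValue K ℝ) (c u u' v v' : K) (R : ℝ)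
    (hR : 0 < R) (hu : f (u - c) ≤ R) (hv : 20 * R ≤ f (v - c))
    (hu' : f (u' - c) ≤ R) (hv' : 20 * R ≤ f (v' - c)) :
    f (u - u') * f (v - v') ≤ 1 / 4 * (f (u - v) * f (u' - v')) := by
  have p1 := (arch_pair f c u v R hR hu hv).1
  have p2 := (arch_pair f c u' v' R hR hu' hv').1
  have h1 : f (u - u') ≤ 2 * R := by
    have := f.add_le (u - c) (c - u')
    rw [sub_add_sub_cancel, f.map_sub c u'] at this
    linarith
  have h2 : f (v - v') ≤ f (v - c) + f (v' - c) := by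
    have := f.add_le (v - c) (c - v')
    rwa [sub_add_sub_cancel, f.map_sub c v'] at this
  have a1 := f.nonneg (u - u')
  have a2 := f.nonneg (v - v')
  have a3 := f.nonneg (u - v)
  have a4 := f.nonneg (u' - v')
  set p := f (v - c)
  set q := f (v' - c)
  have m1 : f (u - u') * f (v - v') ≤ 2 * R * (p + q) := mul_le_mul h1 h2 a2 (by positivity)
  have m2 : p * q ≤ (20 / 19 * f (u - v)) * (20 / 19 * f (u' - v')) :=
    mul_le_mul p1 p2 (by linarith) (by linarith)
  have m3 : 2 * R * p ≤ p * q / 10 := by nlinarith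
  have m4 : 2 * R * q ≤ p * q / 10 := by nlinarith
  nlinarith

lemma sel_arch {K ι : Type*} [Field K] (f : AbsoluteValue K ℝ) (e : K →+* ℂ)
    (hf : ∀ x, f x = ‖e x‖) (vec : ι → Fin 2 → K)
    (x : ι → K) (A B : Finset ι) (hA : ∀ i ∈ A, vec i 0 = vec i 1 * x i)
    (hB : ∀ i ∈ B, vec i 0 = vec i 1 * x i) (hinj : Set.InjOn x A)
    (hcard : 2 * 1601 ^ 2 < A.card) :
    ∃ A' ⊆ A, ∃ B' ⊆ B, A.card ≤ 2 * 1601 ^ 2 * A'.card ∧ B.card ≤ 2 * B'.card ∧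
      Gauged f (1 / 4) vec A' B' := by
  obtain ⟨c, r, hr, hc, hE⟩ := min_disc f x A (2 * 1601 ^ 2) (by norm_num) hinj hcard
  have hcount : 2 * (A.filter (fun t => f (x t - c) ≤ 400 * r)).card ≤ A.card := by
    set E := A.filter (fun t => f (x t - c) ≤ 400 * r) with hEdef
    obtain ⟨J, hJ⟩ : ∃ J : Finset ℤ, J = Finset.Icc (-800 : ℤ) 800 := ⟨_, rfl⟩
    have hJc : J.card = 1601 := by rw [hJ, Int.card_Icc]; norm_num; rfl
    let cell : ι → ℤ × ℤ := fun t => (⌊2 * (e (x t - c)).re / r⌋, ⌊2 * (e (x t - c)).im / r⌋)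
    have hbd : ∀ y : ℝ, |y| ≤ 400 * r → ⌊2 * y / r⌋ ∈ J := by
      intro y hy
      rw [abs_le] at hy
      rw [hJ, Finset.mem_Icc]
      constructor
      · rw [Int.le_floor, le_div_iff₀ hr]; push_cast; linarith
      · have : (⌊2 * y / r⌋ : ℝ) ≤ 800 := by
          refine (Int.floor_le _).trans ?_
          rw [div_le_iff₀ hr]; linarith
        exact_mod_cast this
    have hmaps : ∀ t ∈ E, cell t ∈ J ×ˢ J := by
      intro t ht
      have h0 := (Finset.mem_filter.1 ht).2
      rw [hf] at h0
      exact Finset.mem_product.2 ⟨hbd _ ((Complex.abs_re_le_norm _).trans h0),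
        hbd _ ((Complex.abs_im_le_norm _).trans h0)⟩
    have hsum := Finset.card_eq_sum_card_fiberwise hmaps
    have hle : ∀ b ∈ J ×ˢ J,
        2 * 1601 ^ 2 * (E.filter (fun t => cell t = b)).card ≤ A.card := by
      intro b _
      apply le_of_lt
      apply hE
      · exact (Finset.filter_subset _ _).trans (Finset.filter_subset _ _)
      · intro t ht t' ht'
        have e1 := (Finset.mem_filter.1 ht).2
        have e2 := (Finset.mem_filter.1 ht').2
        have e3 : cell t = cell t' := e1.trans e2.symm
        have r1 := Int.abs_sub_lt_one_of_floor_eq_floor (congrArg Prod.fst e3)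
        have r2 := Int.abs_sub_lt_one_of_floor_eq_floor (congrArg Prod.snd e3)
        rw [hf]
        have hz : e (x t - x t') = e (x t - c) - e (x t' - c) := by
          rw [← map_sub]; congr 1; ring
        rw [hz]
        refine (Complex.norm_le_abs_re_add_abs_im _).trans_lt ?_
        rw [Complex.sub_re, Complex.sub_im]
        have key : ∀ y y' : ℝ, |2 * y / r - 2 * y' / r| < 1 → |y - y'| < r / 2 := by
          intro y y' h
          rw [← sub_div, abs_div, abs_of_pos hr, div_lt_one hr, ← mul_sub, abs_mul] at h
          norm_num at h
          linarith
        have := key _ _ r1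
        have := key _ _ r2
        linarith
    have hs := Finset.sum_le_sum hle
    rw [← Finset.mul_sum, ← hsum, Finset.sum_const, Finset.card_product] at hs
    simp only [hJc, smul_eq_mul] at hs
    norm_num at hs
    omega
  have hAn := Finset.card_filter_add_card_filter_not (s := A) (fun t => f (x t - c) ≤ 400 * r)
  have hBn := Finset.card_filter_add_card_filter_not (s := B) (fun t => f (x t - c) ≤ 20 * r)
  by_cases h : B.card ≤ 2 * (B.filter (fun t => f (x t - c) ≤ 20 * r)).card
  · refine ⟨A.filter (fun t => ¬ f (x t - c) ≤ 400 * r), Finset.filter_subset _ _,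
      B.filter (fun t => f (x t - c) ≤ 20 * r), Finset.filter_subset _ _, by omega, h, ?_⟩
    refine gauge_of f _ vec x _ _ (fun i hi => hA i (Finset.filter_subset _ _ hi))
      (fun i hi => hB i (Finset.filter_subset _ _ hi)) c (20 * r) (by linarith) ?_ ?_
    · intro a ha b hb
      have h1 := (Finset.mem_filter.1 ha).2
      have h2 := (Finset.mem_filter.1 hb).2
      rw [mul_comm, f.map_sub (x a) (x b)]
      exact (arch_pair f c _ _ (20 * r) (by linarith) h2 (by linarith)).2
    · intro a ha a' ha' b hb b' hb'
      have h1 := (Finset.mem_filter.1 ha).2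
      have h2 := (Finset.mem_filter.1 hb).2
      have h1' := (Finset.mem_filter.1 ha').2
      have h2' := (Finset.mem_filter.1 hb').2
      rw [mul_comm, f.map_sub (x a) (x b), f.map_sub (x a') (x b')]
      exact arch_cross f c _ _ _ _ (20 * r) (by linarith) h2 (by linarith) h2' (by linarith)
  · refine ⟨A.filter (fun t => f (x t - c) ≤ r), Finset.filter_subset _ _,
      B.filter (fun t => ¬ f (x t - c) ≤ 20 * r), Finset.filter_subset _ _, hc, by omega, ?_⟩
    refine gauge_of f _ vec x _ _ (fun i hi => hA i (Finset.filter_subset _ _ hi))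
      (fun i hi => hB i (Finset.filter_subset _ _ hi)) c r hr ?_ ?_
    · intro a ha b hb
      have h1 := (Finset.mem_filter.1 ha).2
      have h2 := (Finset.mem_filter.1 hb).2
      exact (arch_pair f c _ _ r hr h1 (by linarith)).2
    · intro a ha a' ha' b hb b' hb'
      have h1 := (Finset.mem_filter.1 ha).2
      have h2 := (Finset.mem_filter.1 hb).2
      have h1' := (Finset.mem_filter.1 ha').2
      have h2' := (Finset.mem_filter.1 hb').2
      exact arch_cross f c _ _ _ _ r hr h1 (by linarith) h1' (by linarith)

/-- The places in `S`. -/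
abbrev SPl (K : Type*) [Field K] [NumberField K] (T : Finset (HeightOneSpectrum (𝓞 K))) :=
  InfinitePlace K ⊕ {v // v ∈ T}

noncomputable section

def fPl {K : Type*} [Field K] [NumberField K] (T : Finset (HeightOneSpectrum (𝓞 K))) :
    SPl K T → AbsoluteValue K ℝ :=
  Sum.elim (fun w => w.1) (fun v => HeightOneSpectrum.adicAbv K v.1)

def mPl {K : Type*} [Field K] [NumberField K] (T : Finset (HeightOneSpectrum (𝓞 K))) :
    SPl K T → ℕ :=
  Sum.elim (fun w => w.mult) (fun _ => 1)

def tPl {K : Type*} [Field K] [NumberField K] (T : Finset (HeightOneSpectrum (𝓞 K))) :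
    SPl K T → ℝ :=
  Sum.elim (fun _ => 1 / 4) (fun _ => 1)

end

section
variable {K : Type*} [Field K] [NumberField K] (T : Finset (HeightOneSpectrum (𝓞 K)))

lemma card_SPl : Fintype.card (SPl K T) = sCard K T := by
  simp [sCard, add_comm]

lemma sel_one {ι : Type*} (v : SPl K T) (vec : ι → Fin 2 → K) (m : ℕ) (A B : Finset ι)
    (hA : ∀ i ∈ A, vec i 1 ≠ 0) (hB : ∀ i ∈ B, vec i 1 ≠ 0)
    (hinj : ∀ i ∈ A, ∀ j ∈ A, wdg (vec i) (vec j) = 0 → i = j)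
    (cA : 10 ^ 7 * m ≤ A.card) (cB : 10 ^ 7 * m ≤ B.card) :
    ∃ A' ⊆ A, ∃ B' ⊆ B, m ≤ A'.card ∧ m ≤ B'.card ∧
      Gauged (fPl T v) (tPl T v) vec A' B' := by
  rcases Nat.eq_zero_or_pos m with rfl | hm
  · refine ⟨∅, by simp, ∅, by simp, by simp, by simp, ?_⟩
    exact gauge_of _ _ vec (fun _ => 0) _ _ (by simp) (by simp) 0 1 one_pos (by simp) (by simp)
  have hx : ∀ i, vec i 1 ≠ 0 → vec i 0 = vec i 1 * (vec i 0 / vec i 1) := by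
    intro i hi; field_simp
  have hinj' : Set.InjOn (fun i => vec i 0 / vec i 1) (A : Set ι) := by
    intro i hi j hj hij
    apply hinj i hi j hj
    have h1 := hA i hi
    have h2 := hA j hj
    simp only at hij
    rw [div_eq_div_iff h1 h2] at hij
    rw [wdg, hij]; ring
  rcases v with w | v
  · obtain ⟨A', h1, B', h2, h3, h4, h5⟩ := sel_arch (w.1) w.embedding
      (fun x => (InfinitePlace.norm_embedding_eq w x).symm) vec (fun i => vec i 0 / vec i 1) A B
      (fun i hi => hx i (hA i hi)) (fun i hi => hx i (hB i hi)) hinj' (by omega)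
    exact ⟨A', h1, B', h2, by omega, by omega, h5⟩
  · obtain ⟨A', h1, B', h2, h3, h4, h5⟩ := sel_nonarch (HeightOneSpectrum.adicAbv K v.1)
      (HeightOneSpectrum.adicAbv_add_le_max K v.1) vec (fun i => vec i 0 / vec i 1) A B
      (fun i hi => hx i (hA i hi)) (fun i hi => hx i (hB i hi)) hinj' (by omega)
    exact ⟨A', h1, B', h2, by omega, by omega, h5⟩

lemma sel_fin {ι : Type*} (V : Finset (SPl K T)) (vec : ι → Fin 2 → K) (m : ℕ) (A B : Finset ι)
    (hA : ∀ i ∈ A, vec i 1 ≠ 0) (hB : ∀ i ∈ B, vec i 1 ≠ 0)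
    (hinj : ∀ i ∈ A, ∀ j ∈ A, wdg (vec i) (vec j) = 0 → i = j)
    (cA : (10 ^ 7) ^ V.card * m ≤ A.card) (cB : (10 ^ 7) ^ V.card * m ≤ B.card) :
    ∃ A' ⊆ A, ∃ B' ⊆ B, m ≤ A'.card ∧ m ≤ B'.card ∧
      ∀ v ∈ V, Gauged (fPl T v) (tPl T v) vec A' B' := by
  induction V using Finset.induction_on generalizing A B with
  | empty => exact ⟨A, subset_rfl, B, subset_rfl, by simpa using cA, by simpa using cB, by simp⟩
  | insert v V hv ih =>
    rw [Finset.card_insert_of_notMem hv, pow_succ', mul_assoc] at cA cB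
    obtain ⟨A₁, h1, B₁, h2, h3, h4, h5⟩ := sel_one T v vec _ A B hA hB hinj cA cB
    obtain ⟨A₂, g1, B₂, g2, g3, g4, g5⟩ := ih A₁ B₁ (fun i hi => hA i (h1 hi))
      (fun i hi => hB i (h2 hi)) (fun i hi j hj => hinj i (h1 hi) j (h1 hj)) h3 h4
    refine ⟨A₂, g1.trans h1, B₂, g2.trans h2, g3, g4, ?_⟩
    intro w hw
    rcases Finset.mem_insert.1 hw with rfl | hw
    · exact h5.mono g1 g2
    · exact g5 w hw

lemma sel_all {ι : Type*} (vec : ι → Fin 2 → K) (m : ℕ) (A B : Finset ι)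
    (hA : ∀ i ∈ A, vec i 1 ≠ 0) (hB : ∀ i ∈ B, vec i 1 ≠ 0)
    (hinj : ∀ i ∈ A, ∀ j ∈ A, wdg (vec i) (vec j) = 0 → i = j)
    (cA : (10 ^ 7) ^ sCard K T * m ≤ A.card) (cB : (10 ^ 7) ^ sCard K T * m ≤ B.card) :
    ∃ A' ⊆ A, ∃ B' ⊆ B, m ≤ A'.card ∧ m ≤ B'.card ∧
      ∀ v, Gauged (fPl T v) (tPl T v) vec A' B' := by
  rw [← card_SPl, ← Finset.card_univ] at cA cB
  obtain ⟨A', h1, B', h2, h3, h4, h5⟩ := sel_fin T _ vec m A B hA hB hinj cA cB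
  exact ⟨A', h1, B', h2, h3, h4, fun v => h5 v (Finset.mem_univ _)⟩

end

noncomputable section
variable {K : Type*} [Field K] [NumberField K]

/-- sup norm at a finite place -/
def nrm (v : HeightOneSpectrum (𝓞 K)) (u : Fin 2 → K) : ℝ :=
  max (HeightOneSpectrum.adicAbv K v (u 0)) (HeightOneSpectrum.adicAbv K v (u 1))

/-- local logarithmic distance of vectors -/
def dl (v : HeightOneSpectrum (𝓞 K)) (u w : Fin 2 → K) : ℝ :=
  Real.log (nrm v u) + Real.log (nrm v w) - Real.log (HeightOneSpectrum.adicAbv K v (wdg u w))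

/-- local logarithmic distance of points -/
def dP (v : HeightOneSpectrum (𝓞 K)) (P Q : P1 K) : ℝ := dl v P.rep Q.rep

/-- global distance outside `T` -/
def DT (T : Finset (HeightOneSpectrum (𝓞 K))) (P Q : P1 K) : ℝ :=
  ∑ᶠ v, if v ∈ T then 0 else dP v P Q

def ellT (T : Finset (HeightOneSpectrum (𝓞 K))) (x : K) : ℝ :=
  ∑ᶠ v : HeightOneSpectrum (𝓞 K),
    if v ∈ T then 0 else Real.log (HeightOneSpectrum.adicAbv K v x)

def hgtT (T : Finset (HeightOneSpectrum (𝓞 K))) (u : Fin 2 → K) : ℝ :=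
  ∑ᶠ v : HeightOneSpectrum (𝓞 K), if v ∈ T then 0 else Real.log (nrm v u)

lemma fin_ne_one {x : K} (hx : x ≠ 0) :
    {v : HeightOneSpectrum (𝓞 K) | HeightOneSpectrum.adicAbv K v x ≠ 1}.Finite := by
  have h := FinitePlace.hasFiniteMulSupport hx
  have h2 : (Function.mulSupport fun w : FinitePlace K => w x).Finite := h
  refine (h2.image FinitePlace.maximalIdeal).subset ?_
  intro v hv
  refine ⟨FinitePlace.mk v, ?_, FinitePlace.maximalIdeal_mk v⟩
  simp only [Function.mem_mulSupport, FinitePlace.mk_apply, FinitePlace.norm_embedding]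
  exact hv

lemma fin_log (x : K) :
    {v : HeightOneSpectrum (𝓞 K) | Real.log (HeightOneSpectrum.adicAbv K v x) ≠ 0}.Finite := by
  by_cases hx : x = 0
  · subst hx; simp
  · refine (fin_ne_one hx).subset ?_
    intro v hv h
    apply hv
    simp [h]

lemma fin_nrm (u : Fin 2 → K) :
    {v : HeightOneSpectrum (𝓞 K) | Real.log (nrm v u) ≠ 0}.Finite := by
  refine ((fin_log (u 0)).union (fin_log (u 1))).subset ?_
  intro v hv
  by_contra hc
  apply hv
  simp only [Set.mem_union, Set.mem_ofPred_eq, not_or, not_not] at hc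
  rw [nrm]
  rcases max_choice (HeightOneSpectrum.adicAbv K v (u 0)) (HeightOneSpectrum.adicAbv K v (u 1))
    with h | h <;> rw [h]
  · exact hc.1
  · exact hc.2

lemma supp_off (T : Finset (HeightOneSpectrum (𝓞 K))) (g : HeightOneSpectrum (𝓞 K) → ℝ)
    (h : {v | g v ≠ 0}.Finite) : (Function.support fun v => if v ∈ T then 0 else g v).Finite := by
  refine h.subset ?_
  intro v hv hg
  apply hv
  simp [hg]

lemma fin_dl (u w : Fin 2 → K) : {v : HeightOneSpectrum (𝓞 K) | dl v u w ≠ 0}.Finite := by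
  refine (((fin_nrm u).union (fin_nrm w)).union (fin_log (wdg u w))).subset ?_
  intro v hv
  by_contra hc
  apply hv
  simp only [Set.mem_union, Set.mem_ofPred_eq, not_or, not_not] at hc
  rw [dl, hc.1.1, hc.1.2, hc.2]; simp

lemma DT_eq (T : Finset (HeightOneSpectrum (𝓞 K))) (P Q : P1 K) :
    DT T P Q = hgtT T P.rep + hgtT T Q.rep - ellT T (wdg P.rep Q.rep) := by
  rw [hgtT, hgtT, ellT, ← finsum_add_distrib (supp_off T _ (fin_nrm _)) (supp_off T _ (fin_nrm _)),
    ← finsum_sub_distrib _ (supp_off T _ (fin_log _)), DT]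
  · apply finsum_congr
    intro v
    split_ifs
    · simp
    · rfl
  · have := supp_off T (fun v => Real.log (nrm v P.rep) + Real.log (nrm v Q.rep)) (by
      refine ((fin_nrm P.rep).union (fin_nrm Q.rep)).subset ?_
      intro v hv
      by_contra hc
      apply hv
      simp only [Set.mem_union, Set.mem_ofPred_eq, not_or, not_not] at hc
      rw [hc.1, hc.2]; simp)
    refine this.subset ?_
    intro v hv
    simp only [Function.mem_support] at hv ⊢
    intro h
    apply hv
    split_ifs at h ⊢
    · simp
    · exact h

lemma DT_le (T : Finset (HeightOneSpectrum (𝓞 K))) {ι : Type*} (X : Finset ι) (p q : ι → P1 K)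
    (P Q : P1 K) (h : ∀ v ∉ T, ∑ x ∈ X, dP v (p x) (q x) ≤ dP v P Q) :
    ∑ x ∈ X, DT T (p x) (q x) ≤ DT T P Q := by
  simp only [DT]
  rw [← finsum_sum_comm]
  · apply finsum_le_finsum'
    · have : (⋃ x ∈ X, (Function.support fun v => if v ∈ T then 0 else dP v (p x) (q x))).Finite :=
        Set.Finite.biUnion X.finite_toSet (fun x _ => supp_off T _ (fin_dl _ _))
      refine this.subset ?_
      intro v hv
      by_contra hc
      apply hv
      apply Finset.sum_eq_zero
      intro x hx
      by_contra h0
      exact hc (Set.mem_biUnion hx h0)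
    · exact supp_off T _ (fin_dl _ _)
    · intro v
      simp only
      split_ifs with hv
      · simp
      · exact h v hv
  · intro x _
    exact supp_off T _ (fin_dl _ _)

lemma ellT_mul (T : Finset (HeightOneSpectrum (𝓞 K))) {x y : K} (hx : x ≠ 0) (hy : y ≠ 0) :
    ellT T (x * y) = ellT T x + ellT T y := by
  rw [ellT, ellT, ellT, ← finsum_add_distrib (supp_off T _ (fin_log _)) (supp_off T _ (fin_log _))]
  apply finsum_congr
  intro v
  split_ifs
  · simp
  · rw [map_mul, Real.log_mul]
    · exact (map_ne_zero_iff_ne v hx)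
    · exact (map_ne_zero_iff_ne v hy)
where map_ne_zero_iff_ne (v : HeightOneSpectrum (𝓞 K)) {x : K} (hx : x ≠ 0) :
    HeightOneSpectrum.adicAbv K v x ≠ 0 := ((HeightOneSpectrum.adicAbv K v).pos hx).ne'

lemma prod_formula (T : Finset (HeightOneSpectrum (𝓞 K))) {x : K} (hx : x ≠ 0) :
    ∑ v : SPl K T, (mPl T v : ℝ) * Real.log (fPl T v x) = - ellT T x := by
  have h := prod_abs_eq_one hx
  rw [← finprod_comp_equiv FinitePlace.equivHeightOneSpectrum.symm] at h
  simp only [FinitePlace.equivHeightOneSpectrum_symm_apply, FinitePlace.norm_embedding] at h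
  let s : Finset (HeightOneSpectrum (𝓞 K)) := (fin_ne_one hx).toFinset ∪ T
  have hs : (Function.mulSupport fun v : HeightOneSpectrum (𝓞 K) =>
      HeightOneSpectrum.adicAbv K v x) ⊆ s := by
    intro v hv
    simp only [s, Finset.coe_union, Set.Finite.coe_toFinset]
    exact Or.inl hv
  rw [finprod_eq_prod_of_mulSupport_subset _ hs] at h
  have hl : ellT T x = ∑ v ∈ s, if v ∈ T then 0 else
      Real.log (HeightOneSpectrum.adicAbv K v x) := by
    apply finsum_eq_sum_of_support_subset
    intro v hv
    apply hs
    intro h0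
    apply hv
    simp [h0]
  have hpos : ∀ v : HeightOneSpectrum (𝓞 K), HeightOneSpectrum.adicAbv K v x ≠ 0 :=
    fun v => ((HeightOneSpectrum.adicAbv K v).pos hx).ne'
  have hwpos : ∀ w : InfinitePlace K, w x ≠ 0 := fun w => (InfinitePlace.pos_iff.2 hx).ne'
  have hlog := congrArg Real.log h
  rw [Real.log_one, Real.log_mul (Finset.prod_ne_zero_iff.2 fun w _ => pow_ne_zero _ (hwpos w))
    (Finset.prod_ne_zero_iff.2 fun v _ => hpos v), Real.log_prod (fun w _ => pow_ne_zero _ (hwpos w)),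
    Real.log_prod (fun v _ => hpos v)] at hlog
  have hT : ∑ v ∈ s, Real.log (HeightOneSpectrum.adicAbv K v x) =
      ∑ v ∈ T, Real.log (HeightOneSpectrum.adicAbv K v x) + ellT T x := by
    rw [hl]
    have hsub : T ⊆ s := Finset.subset_union_right
    have : ∑ v ∈ T, Real.log (HeightOneSpectrum.adicAbv K v x) =
        ∑ v ∈ s, if v ∈ T then Real.log (HeightOneSpectrum.adicAbv K v x) else 0 := by
      rw [← Finset.sum_filter]
      apply Finset.sum_congr _ (fun _ _ => rfl)
      ext v
      simp only [Finset.mem_filter]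
      exact ⟨fun h => ⟨hsub h, h⟩, fun h => h.2⟩
    rw [this, ← Finset.sum_add_distrib]
    apply Finset.sum_congr rfl
    intro v _
    split_ifs <;> simp
  rw [hT] at hlog
  rw [Fintype.sum_sum_type]
  have e1 : ∑ w : InfinitePlace K, (mPl T (Sum.inl w) : ℝ) * Real.log (fPl T (Sum.inl w) x) =
      ∑ w : InfinitePlace K, Real.log (w x ^ w.mult) := by
    apply Finset.sum_congr rfl
    intro w _
    rw [Real.log_pow]; rfl
  have e2 : ∑ v : {v // v ∈ T}, (mPl T (Sum.inr v) : ℝ) * Real.log (fPl T (Sum.inr v) x) =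
      ∑ v ∈ T, Real.log (HeightOneSpectrum.adicAbv K v x) := by
    rw [← Finset.sum_coe_sort T]
    apply Finset.sum_congr rfl
    intro v _
    simp [mPl, fPl]
  rw [e1, e2]
  linarith

end

noncomputable section
variable {K : Type*} [Field K] [NumberField K]

lemma wdg_zero_prop {u w : Fin 2 → K} (hu : u ≠ 0) (hw : w ≠ 0) (h : wdg u w = 0) :
    ∃ c : K, c ≠ 0 ∧ u = c • w := by
  rw [wdg] at h
  by_cases h0 : w 0 = 0
  · have h1 : w 1 ≠ 0 := by
      intro h1; apply hw; ext i; fin_cases i <;> simp [h0, h1]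
    have hu0 : u 0 = 0 := by
      rw [h0] at h; simpa [h1] using h
    have e : u = (u 1 / w 1) • w := by
      ext i; fin_cases i
      · simp [h0, hu0]
      · simp [h1]
    refine ⟨u 1 / w 1, ?_, e⟩
    intro hc; rw [hc, zero_smul] at e; exact hu e
  · have e : u = (u 0 / w 0) • w := by
      ext i; fin_cases i
      · simp [h0]
      · simp only [Fin.mk_one, Pi.smul_apply, smul_eq_mul]
        field_simp
        linear_combination -h
    refine ⟨u 0 / w 0, ?_, e⟩
    intro hc; rw [hc, zero_smul] at e; exact hu e

lemma wdg_rep_ne {P Q : P1 K} (h : P ≠ Q) : wdg P.rep Q.rep ≠ 0 := by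
  intro h0
  obtain ⟨c, hc, e⟩ := wdg_zero_prop P.rep_nonzero Q.rep_nonzero h0
  apply h
  rw [← P.mk_rep, ← Q.mk_rep, Projectivization.mk_eq_mk_iff']
  exact ⟨c, e.symm⟩

lemma wdg_self (u : Fin 2 → K) : wdg u u = 0 := by rw [wdg]; ring

lemma wdg_smul_left (c : K) (u w : Fin 2 → K) : wdg (c • u) w = c * wdg u w := by
  simp only [wdg, Pi.smul_apply, smul_eq_mul]; ring

lemma wdg_comm (u w : Fin 2 → K) : wdg u w = - wdg w u := by rw [wdg, wdg]; ring

lemma wdg_smul_right (c : K) (u w : Fin 2 → K) : wdg u (c • w) = c * wdg u w := by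
  simp only [wdg, Pi.smul_apply, smul_eq_mul]; ring

lemma rep_mk (u : Fin 2 → K) (hu : u ≠ 0) :
    ∃ c : K, c ≠ 0 ∧ u = c • (Projectivization.mk K u hu).rep := by
  obtain ⟨a, ha⟩ := Projectivization.exists_smul_eq_mk_rep K u hu
  refine ⟨(a⁻¹ : Kˣ), by simp, ?_⟩
  rw [← ha, Units.smul_def, smul_smul]
  simp

lemma nrm_pos (v : HeightOneSpectrum (𝓞 K)) {u : Fin 2 → K} (hu : u ≠ 0) : 0 < nrm v u := by
  rw [nrm, lt_max_iff]
  by_contra hc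
  push Not at hc
  apply hu
  ext i; fin_cases i
  · exact ((HeightOneSpectrum.adicAbv K v).eq_zero).1
      (le_antisymm hc.1 ((HeightOneSpectrum.adicAbv K v).nonneg _))
  · exact ((HeightOneSpectrum.adicAbv K v).eq_zero).1
      (le_antisymm hc.2 ((HeightOneSpectrum.adicAbv K v).nonneg _))

lemma nrm_smul (v : HeightOneSpectrum (𝓞 K)) (c : K) (u : Fin 2 → K) :
    nrm v (c • u) = HeightOneSpectrum.adicAbv K v c * nrm v u := by
  rw [nrm, nrm, mul_max_of_nonneg _ _ ((HeightOneSpectrum.adicAbv K v).nonneg _)]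
  simp

lemma dl_comm (v : HeightOneSpectrum (𝓞 K)) (u w : Fin 2 → K) : dl v u w = dl v w u := by
  rw [dl, dl, wdg_comm, AbsoluteValue.map_neg]; ring

lemma dl_smul (v : HeightOneSpectrum (𝓞 K)) {c : K} (hc : c ≠ 0) {u w : Fin 2 → K}
    (h : wdg u w ≠ 0) (hu : u ≠ 0) : dl v (c • u) w = dl v u w := by
  have h1 := ((HeightOneSpectrum.adicAbv K v).pos hc).ne'
  rw [dl, dl, wdg_smul_left, nrm_smul, map_mul, Real.log_mul h1 (nrm_pos v hu).ne',
    Real.log_mul h1 ((HeightOneSpectrum.adicAbv K v).pos h).ne']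
  ring

lemma dP_mk (v : HeightOneSpectrum (𝓞 K)) {u w : Fin 2 → K} (hu : u ≠ 0) (hw : w ≠ 0)
    (h : wdg u w ≠ 0) :
    dP v (Projectivization.mk K u hu) (Projectivization.mk K w hw) = dl v u w := by
  obtain ⟨a, ha, ea⟩ := rep_mk u hu
  obtain ⟨b, hb, eb⟩ := rep_mk w hw
  set p := (Projectivization.mk K u hu).rep with hp
  set q := (Projectivization.mk K w hw).rep with hq
  have hpq : wdg p q ≠ 0 := by
    intro h0; apply h; rw [ea, eb, wdg_smul_left, wdg_smul_right, h0]; simp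
  have hp0 : p ≠ 0 := Projectivization.rep_nonzero _
  have hq0 : q ≠ 0 := Projectivization.rep_nonzero _
  have hqp : wdg q (a • p) ≠ 0 := by
    rw [wdg_smul_right, wdg_comm]; simp [ha, hpq]
  have e1 : dl v u w = dl v p q := by
    rw [ea, eb, dl_comm, dl_smul v hb hqp hq0, dl_comm, dl_smul v ha hpq hp0]
  rw [e1]; rfl

lemma dP_comm (v : HeightOneSpectrum (𝓞 K)) (P Q : P1 K) : dP v P Q = dP v Q P := dl_comm v _ _

lemma adic_sub (v : HeightOneSpectrum (𝓞 K)) (x y : K) :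
    HeightOneSpectrum.adicAbv K v (x - y) ≤
      max (HeightOneSpectrum.adicAbv K v x) (HeightOneSpectrum.adicAbv K v y) := by
  have := HeightOneSpectrum.adicAbv_add_le_max K v x (-y)
  rwa [AbsoluteValue.map_neg, ← sub_eq_add_neg] at this

lemma wdg_le (v : HeightOneSpectrum (𝓞 K)) (u w : Fin 2 → K) :
    HeightOneSpectrum.adicAbv K v (wdg u w) ≤ nrm v u * nrm v w := by
  rw [wdg]
  refine (adic_sub v _ _).trans (max_le ?_ ?_)
  · rw [map_mul]
    exact mul_le_mul (le_max_left _ _) (le_max_right _ _) (AbsoluteValue.nonneg _ _)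
      ((AbsoluteValue.nonneg _ _).trans (le_max_left _ _))
  · rw [map_mul]
    exact mul_le_mul (le_max_right _ _) (le_max_left _ _) (AbsoluteValue.nonneg _ _)
      ((AbsoluteValue.nonneg _ _).trans (le_max_left _ _))

lemma dP_nonneg (v : HeightOneSpectrum (𝓞 K)) {P Q : P1 K} (h : P ≠ Q) : 0 ≤ dP v P Q := by
  have h0 := wdg_rep_ne h
  rw [dP, dl, ← Real.log_mul (nrm_pos v P.rep_nonzero).ne' (nrm_pos v Q.rep_nonzero).ne',
    sub_nonneg]
  exact Real.log_le_log (AbsoluteValue.pos _ h0) (wdg_le v _ _)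

lemma dP_ultra (v : HeightOneSpectrum (𝓞 K)) {P Q R : P1 K} (h1 : P ≠ Q) (h2 : Q ≠ R)
    (h3 : P ≠ R) : min (dP v P Q) (dP v Q R) ≤ dP v P R := by
  have w1 := AbsoluteValue.pos (HeightOneSpectrum.adicAbv K v) (wdg_rep_ne h1)
  have w2 := AbsoluteValue.pos (HeightOneSpectrum.adicAbv K v) (wdg_rep_ne h2)
  have w3 := AbsoluteValue.pos (HeightOneSpectrum.adicAbv K v) (wdg_rep_ne h3)
  have n1 := nrm_pos v P.rep_nonzero
  have n2 := nrm_pos v Q.rep_nonzero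
  have n3 := nrm_pos v R.rep_nonzero
  have key : HeightOneSpectrum.adicAbv K v (wdg P.rep R.rep) * nrm v Q.rep ≤
      max (HeightOneSpectrum.adicAbv K v (wdg Q.rep R.rep) * nrm v P.rep)
        (HeightOneSpectrum.adicAbv K v (wdg P.rep Q.rep) * nrm v R.rep) := by
    have hc : ∀ i, HeightOneSpectrum.adicAbv K v (wdg P.rep R.rep) *
        HeightOneSpectrum.adicAbv K v (Q.rep i) ≤
        max (HeightOneSpectrum.adicAbv K v (wdg Q.rep R.rep) * nrm v P.rep)
        (HeightOneSpectrum.adicAbv K v (wdg P.rep Q.rep) * nrm v R.rep) := by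
      intro i
      have e : wdg P.rep R.rep * Q.rep i =
          wdg Q.rep R.rep * P.rep i + wdg P.rep Q.rep * R.rep i := by
        fin_cases i <;> simp only [wdg, Fin.zero_eta, Fin.mk_one] <;> ring
      rw [← map_mul, e]
      refine (HeightOneSpectrum.adicAbv_add_le_max K v _ _).trans ?_
      rw [map_mul, map_mul]
      have hi : ∀ u : Fin 2 → K, HeightOneSpectrum.adicAbv K v (u i) ≤ nrm v u := by
        intro u; fin_cases i
        · exact le_max_left _ _
        · exact le_max_right _ _
      exact max_le_max (mul_le_mul_of_nonneg_left (hi _) w2.le)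
        (mul_le_mul_of_nonneg_left (hi _) w1.le)
    conv_lhs => rw [nrm, mul_max_of_nonneg _ _ w3.le]
    exact max_le (hc 0) (hc 1)
  rcases le_max_iff.1 key with h | h
  · apply min_le_of_right_le
    have := Real.log_le_log (mul_pos w3 n2) h
    rw [Real.log_mul w3.ne' n2.ne', Real.log_mul w2.ne' n1.ne'] at this
    rw [dP, dP, dl, dl]; linarith
  · apply min_le_of_left_le
    have := Real.log_le_log (mul_pos w3 n2) h
    rw [Real.log_mul w3.ne' n2.ne', Real.log_mul w1.ne' n3.ne'] at this
    rw [dP, dP, dl, dl]; linarith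

lemma DT_comm (T : Finset (HeightOneSpectrum (𝓞 K))) (P Q : P1 K) : DT T P Q = DT T Q P := by
  rw [DT, DT]; apply finsum_congr; intro v; rw [dP_comm]

lemma DT_nonneg (T : Finset (HeightOneSpectrum (𝓞 K))) {P Q : P1 K} (h : P ≠ Q) :
    0 ≤ DT T P Q := by
  rw [DT]
  apply finsum_nonneg
  intro v
  split_ifs
  · exact le_rfl
  · exact dP_nonneg v h

lemma cross_formula (T : Finset (HeightOneSpectrum (𝓞 K))) {a a' b b' : P1 K} (h1 : a ≠ a')
    (h2 : b ≠ b') (h3 : a ≠ b) (h4 : a' ≠ b') :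
    ∑ v : SPl K T, (mPl T v : ℝ) * (Real.log (fPl T v (wdg a.rep a'.rep)) +
      Real.log (fPl T v (wdg b.rep b'.rep)) - Real.log (fPl T v (wdg a.rep b.rep)) -
      Real.log (fPl T v (wdg a'.rep b'.rep))) = DT T a a' + DT T b b' - DT T a b - DT T a' b' := by
  simp only [mul_sub, mul_add, Finset.sum_sub_distrib, Finset.sum_add_distrib]
  rw [prod_formula T (wdg_rep_ne h1), prod_formula T (wdg_rep_ne h2),
    prod_formula T (wdg_rep_ne h3), prod_formula T (wdg_rep_ne h4), DT_eq, DT_eq, DT_eq, DT_eq]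
  ring

end

noncomputable section
variable {K : Type*} [Field K] [NumberField K]

lemma one_le_log_four : (1 : ℝ) ≤ - Real.log (1 / 4) := by
  rw [one_div, Real.log_inv, neg_neg]
  have h2 := Real.log_two_gt_d9
  have : Real.log 4 = 2 * Real.log 2 := by
    rw [show (4 : ℝ) = 2 ^ 2 by norm_num, Real.log_pow]; norm_num
  rw [this]; linarith

lemma mPl_bounds (T : Finset (HeightOneSpectrum (𝓞 K))) (v : SPl K T) :
    (1 : ℝ) ≤ mPl T v ∧ (mPl T v : ℝ) ≤ 2 := by
  rcases v with w | v
  · simp only [mPl, Sum.elim_inl, InfinitePlace.mult]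
    split_ifs <;> norm_num
  · simp [mPl]

lemma quartet (T : Finset (HeightOneSpectrum (𝓞 K))) (A B : Finset (P1 K))
    (hdisj : Disjoint A B)
    (hG : ∀ v, Gauged (fPl T v) (tPl T v) (fun P : P1 K => P.rep) A B)
    {a a' b b' : P1 K} (ha : a ∈ A) (ha' : a' ∈ A) (hb : b ∈ B) (hb' : b' ∈ B) (h1 : a ≠ a')
    (h2 : b ≠ b') :
    1 ≤ DT T a b + DT T a' b' ∧ ∀ v : SPl K T,
      Real.log (fPl T v (wdg a.rep b.rep)) + Real.log (fPl T v (wdg a'.rep b'.rep)) ≤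
      Real.log (fPl T v (wdg a.rep a'.rep)) + Real.log (fPl T v (wdg b.rep b'.rep)) +
      (DT T a b + DT T a' b') := by
  have h3 : a ≠ b := fun h => Finset.disjoint_left.1 hdisj ha (h ▸ hb)
  have h4 : a' ≠ b' := fun h => Finset.disjoint_left.1 hdisj ha' (h ▸ hb')
  have hcf := cross_formula T h1 h2 h3 h4
  set L : SPl K T → ℝ := fun v => Real.log (fPl T v (wdg a.rep b.rep)) +
      Real.log (fPl T v (wdg a'.rep b'.rep)) - Real.log (fPl T v (wdg a.rep a'.rep)) -
      Real.log (fPl T v (wdg b.rep b'.rep)) with hL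
  have hsum : ∑ v, (mPl T v : ℝ) * L v = DT T a b + DT T a' b' - DT T a a' - DT T b b' := by
    have : ∑ v, (mPl T v : ℝ) * L v = - (DT T a a' + DT T b b' - DT T a b - DT T a' b') := by
      rw [← hcf, ← Finset.sum_neg_distrib]
      apply Finset.sum_congr rfl
      intro v _
      simp only [hL]; ring
    rw [this]; ring
  have hsum' : ∑ v, (mPl T v : ℝ) * L v ≤ DT T a b + DT T a' b' := by
    have := DT_nonneg T h1
    have := DT_nonneg T h2
    linarith
  have hLb : ∀ v, - Real.log (tPl T v) ≤ L v := by
    intro v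
    obtain ⟨N, r, -, -, -, -, -, -, h7⟩ := hG v
    have h := h7 a ha a' ha' b hb b' hb'
    simp only at h
    have p1 := (fPl T v).pos (wdg_rep_ne h1)
    have p2 := (fPl T v).pos (wdg_rep_ne h2)
    have p3 := (fPl T v).pos (wdg_rep_ne h3)
    have p4 := (fPl T v).pos (wdg_rep_ne h4)
    have ht : tPl T v ≠ 0 := by rcases v with w | v <;> simp [tPl]
    have := Real.log_le_log (mul_pos p1 p2) h
    rw [Real.log_mul p1.ne' p2.ne', Real.log_mul ht (mul_pos p3 p4).ne',
      Real.log_mul p3.ne' p4.ne'] at this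
    simp only [hL]; linarith
  have hL0 : ∀ v, 0 ≤ L v := by
    intro v
    refine le_trans ?_ (hLb v)
    rcases v with w | v
    · have := one_le_log_four
      simp only [tPl, Sum.elim_inl]; linarith
    · simp [tPl]
  have hle : ∀ v, L v ≤ DT T a b + DT T a' b' := by
    intro v
    refine le_trans ?_ hsum'
    refine le_trans ?_ (Finset.single_le_sum (f := fun v => (mPl T v : ℝ) * L v)
      (fun v _ => mul_nonneg (by positivity) (hL0 v)) (Finset.mem_univ v))
    nlinarith [(mPl_bounds T v).1, hL0 v]
  constructor
  · obtain ⟨w⟩ : Nonempty (InfinitePlace K) := inferInstance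
    refine le_trans ?_ (hle (Sum.inl w))
    exact le_trans one_le_log_four (hLb (Sum.inl w))
  · intro v
    have := hle v
    simp only [hL] at this
    linarith

lemma exists_le_avg {ι : Type*} (A : Finset ι) (g : ι → ℝ) (H : ℝ) (hA : A.Nonempty)
    (h : ∑ a ∈ A, g a ≤ H) : ∃ a ∈ A, g a * A.card ≤ H := by
  obtain ⟨a, ha, hm⟩ := Finset.exists_min_image A g hA
  refine ⟨a, ha, ?_⟩
  have := Finset.card_nsmul_le_sum A g (g a) (fun x hx => hm x hx)
  rw [nsmul_eq_mul] at this
  linarith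

lemma pick_two (T : Finset (HeightOneSpectrum (𝓞 K))) (A B : Finset (P1 K))
    (hdisj : Disjoint A B) (H : ℝ) (n : ℕ) (hn : 1 ≤ n) (hcA : n + 1 ≤ A.card)
    (hH : ∀ b ∈ B, ∑ a ∈ A, DT T a b ≤ H) {b b' : P1 K} (hb : b ∈ B) (hb' : b' ∈ B) :
    ∃ a ∈ A, ∃ a' ∈ A, a ≠ a' ∧ (DT T a b + DT T a' b') * n ≤ 2 * H := by
  have hpos : ∀ b ∈ B, ∀ a ∈ A, 0 ≤ DT T a b := fun b hb a ha =>
    DT_nonneg T (fun h => Finset.disjoint_left.1 hdisj ha (h ▸ hb))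
  obtain ⟨a, ha, h1⟩ := exists_le_avg A (fun a => DT T a b) H (Finset.card_pos.1 (by omega)) (hH b hb)
  have hc := Finset.card_erase_of_mem ha
  obtain ⟨a', ha', h2⟩ := exists_le_avg (A.erase a) (fun a => DT T a b') H
    (Finset.card_pos.1 (by omega))
    ((Finset.sum_le_sum_of_subset_of_nonneg (Finset.erase_subset _ _)
      (fun x hx _ => hpos b' hb' x hx)).trans (hH b' hb'))
  refine ⟨a, ha, a', Finset.mem_of_mem_erase ha', (Finset.ne_of_mem_erase ha').symm, ?_⟩
  have p1 := hpos b hb a ha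
  have p2 := hpos b' hb' a' (Finset.mem_of_mem_erase ha')
  have c1 : (n : ℝ) ≤ A.card := by exact_mod_cast (by omega)
  have c2 : (n : ℝ) ≤ (A.erase a).card := by exact_mod_cast (by omega)
  nlinarith

lemma card_exceptional {ι σ : Type*} [Fintype σ] (B : Finset ι) (bad : σ → ι → Prop)
    (h : ∀ v, ∀ b ∈ B, ∀ b' ∈ B, bad v b → bad v b' → b = b') (hc : Fintype.card σ < B.card) :
    ∃ b ∈ B, ∀ v, ¬ bad v b := by
  by_contra hcon
  push Not at hcon
  obtain ⟨b₀, hb₀⟩ := Finset.card_pos.1 (show 0 < B.card by omega)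
  obtain ⟨v₀, _⟩ := hcon b₀ hb₀
  haveI : Nonempty σ := ⟨v₀⟩
  choose! g hg using hcon
  have : B.card ≤ (Finset.univ : Finset σ).card := by
    apply Finset.card_le_card_of_injOn g (fun _ _ => Finset.mem_univ _)
    intro b hb b' hb' e
    exact h (g b) b hb b' hb' (hg b hb) (e ▸ hg b' hb')
  rw [Finset.card_univ] at this
  omega

lemma lem3_core (T : Finset (HeightOneSpectrum (𝓞 K))) (A B : Finset (P1 K))
    (hdisj : Disjoint A B)
    (hG : ∀ v, Gauged (fPl T v) (tPl T v) (fun P : P1 K => P.rep) A B)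
    (cA : 200 * sCard K T ≤ A.card) (cB : 200 * sCard K T ≤ B.card) (H : ℝ)
    (hH : ∀ b ∈ B, ∑ a ∈ A, DT T a b ≤ H)
    (hpq : H ≤ 0 ∨ ∃ p q, p ≠ q ∧ p ∉ B ∧ q ∉ B ∧ ∀ b ∈ B, ∀ b' ∈ B, b ≠ b' →
      H / 4 ≤ DT T p q - DT T p b - DT T q b') : False := by
  have hs : 1 ≤ sCard K T := by
    have : 0 < Fintype.card (InfinitePlace K) := Fintype.card_pos
    rw [sCard]; omega
  set s := sCard K T with hsdef
  obtain ⟨n, hn⟩ : ∃ n, n = 200 * s - 1 := ⟨_, rfl⟩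
  have hnpos : (0 : ℝ) < n := by exact_mod_cast (by omega)
  obtain ⟨η, hη⟩ : ∃ η, η = 2 * H / n := ⟨_, rfl⟩
  have hpick : ∀ b ∈ B, ∀ b' ∈ B, ∃ a ∈ A, ∃ a' ∈ A, a ≠ a' ∧ DT T a b + DT T a' b' ≤ η := by
    intro b hb b' hb'
    obtain ⟨a, ha, a', ha', h1, h2⟩ := pick_two T A B hdisj H n (by omega) (by omega) hH hb hb'
    exact ⟨a, ha, a', ha', h1, by rw [hη, le_div_iff₀ hnpos]; exact h2⟩
  have hη1 : 1 ≤ η := by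
    obtain ⟨b, hb, b', hb', hne⟩ := Finset.one_lt_card.1 (show 1 < B.card by omega)
    obtain ⟨a, ha, a', ha', h1, h2⟩ := hpick b hb b' hb'
    exact (quartet T A B hdisj hG ha ha' hb hb' h1 hne).1.trans h2
  have hHpos : 0 < H := by
    by_contra hc
    have : η ≤ 0 := by rw [hη]; exact div_nonpos_of_nonpos_of_nonneg (by linarith) hnpos.le
    linarith
  rcases hpq with h | ⟨p, q, hpq, hp, hq, hmain⟩
  · linarith
  have hG0 := hG
  choose N r hr hNpos hNs hNadd hNup hNlow _ using hG
  have hrep : ∀ (v) (P : P1 K), 0 < N v P.rep := fun v P => hNpos v _ P.rep_nonzero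
  -- lower bound for pairs in B
  have hbb : ∀ v, ∀ b ∈ B, ∀ b' ∈ B, b ≠ b' →
      N v b.rep * N v b'.rep ≤ 8 * Real.exp η * (r v * fPl T v (wdg b.rep b'.rep)) := by
    intro v b hb b' hb' hne
    obtain ⟨a, ha, a', ha', h1, h2⟩ := hpick b hb b' hb'
    have hq := (quartet T A B hdisj hG0 ha ha' hb hb' h1 hne).2 v
    have h3 : a ≠ b := fun h => Finset.disjoint_left.1 hdisj ha (h ▸ hb)
    have h4 : a' ≠ b' := fun h => Finset.disjoint_left.1 hdisj ha' (h ▸ hb')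
    have p1 := (fPl T v).pos (wdg_rep_ne h1)
    have p2 := (fPl T v).pos (wdg_rep_ne hne)
    have p3 := (fPl T v).pos (wdg_rep_ne h3)
    have p4 := (fPl T v).pos (wdg_rep_ne h4)
    have e1 : fPl T v (wdg a.rep b.rep) * fPl T v (wdg a'.rep b'.rep) ≤
        fPl T v (wdg a.rep a'.rep) * fPl T v (wdg b.rep b'.rep) * Real.exp η := by
      rw [← Real.log_le_log_iff (mul_pos p3 p4) (mul_pos (mul_pos p1 p2) (Real.exp_pos _)),
        Real.log_mul p3.ne' p4.ne', Real.log_mul (mul_pos p1 p2).ne' (Real.exp_pos _).ne',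
        Real.log_mul p1.ne' p2.ne', Real.log_exp]
      linarith
    have u1 := hNlow v a ha b hb
    have u2 := hNlow v a' ha' b' hb'
    have u3 := hNup v a.rep a'.rep
    have na := hrep v a
    have na' := hrep v a'
    have nb := hrep v b
    have nb' := hrep v b'
    have hrv := hr v
    have m1 := mul_le_mul u1 u2 (mul_pos na' nb').le (by positivity)
    have m2 : (N v a.rep * N v a'.rep) * (N v b.rep * N v b'.rep) ≤
        (N v a.rep * N v a'.rep) * (8 * Real.exp η * (r v * fPl T v (wdg b.rep b'.rep))) := by
      calc (N v a.rep * N v a'.rep) * (N v b.rep * N v b'.rep)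
          = N v a.rep * N v b.rep * (N v a'.rep * N v b'.rep) := by ring
        _ ≤ 2 * r v * fPl T v (wdg a.rep b.rep) * (2 * r v * fPl T v (wdg a'.rep b'.rep)) := m1
        _ = 4 * (r v * r v) * (fPl T v (wdg a.rep b.rep) * fPl T v (wdg a'.rep b'.rep)) := by ring
        _ ≤ 4 * (r v * r v) * (fPl T v (wdg a.rep a'.rep) * fPl T v (wdg b.rep b'.rep) *
            Real.exp η) := mul_le_mul_of_nonneg_left e1 (by positivity)
        _ = (r v * fPl T v (wdg a.rep a'.rep)) *
            (4 * Real.exp η * (r v * fPl T v (wdg b.rep b'.rep))) := by ring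
        _ ≤ (2 * N v a.rep * N v a'.rep) *
            (4 * Real.exp η * (r v * fPl T v (wdg b.rep b'.rep))) :=
          mul_le_mul_of_nonneg_right u3 (by positivity)
        _ = _ := by ring
    exact le_of_mul_le_mul_left m2 (mul_pos na na')
  have hexc : ∀ (x : P1 K) v, ∀ b ∈ B, ∀ b' ∈ B,
      16 * Real.exp η * (r v * fPl T v (wdg x.rep b.rep)) < N v x.rep * N v b.rep →
      16 * Real.exp η * (r v * fPl T v (wdg x.rep b'.rep)) < N v x.rep * N v b'.rep → b = b' := by
    intro x v b hb b' hb' e1 e2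
    by_contra hne
    have h0 := hbb v b hb b' hb' hne
    have id1 : (wdg b.rep b'.rep) • x.rep =
        (wdg x.rep b'.rep) • b.rep + (-(wdg x.rep b.rep)) • b'.rep := by
      ext i
      simp only [Pi.smul_apply, Pi.add_apply, smul_eq_mul]
      fin_cases i <;> simp only [wdg, Fin.zero_eta, Fin.mk_one] <;> ring
    have h1 := hNadd v ((wdg x.rep b'.rep) • b.rep) ((-(wdg x.rep b.rep)) • b'.rep)
    rw [← id1, hNs, hNs, hNs, AbsoluteValue.map_neg] at h1
    have nx := hrep v x
    have nb := hrep v b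
    have nb' := hrep v b'
    have hrv := hr v
    have hE := Real.exp_pos η
    have h2 : max (fPl T v (wdg x.rep b'.rep) * N v b.rep)
        (fPl T v (wdg x.rep b.rep) * N v b'.rep) * (16 * Real.exp η * r v) <
        N v x.rep * (N v b.rep * N v b'.rep) := by
      rw [max_mul_of_nonneg _ _ (by positivity)]
      apply max_lt
      · nlinarith [mul_lt_mul_of_pos_right e2 nb]
      · nlinarith [mul_lt_mul_of_pos_right e1 nb']
    have h3 := mul_le_mul_of_nonneg_left h0 nx.le
    have h4 := mul_le_mul_of_nonneg_right h1 (show 0 ≤ 8 * Real.exp η * r v by positivity)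
    nlinarith
  have hcard : Fintype.card (SPl K T) = s := card_SPl T
  obtain ⟨b, hb, hbgood⟩ := card_exceptional B
    (fun v b => 16 * Real.exp η * (r v * fPl T v (wdg p.rep b.rep)) < N v p.rep * N v b.rep)
    (hexc p) (by omega)
  have hce := Finset.card_erase_of_mem hb
  obtain ⟨b', hb'e, hbgood'⟩ := card_exceptional (B.erase b)
    (fun v b => 16 * Real.exp η * (r v * fPl T v (wdg q.rep b.rep)) < N v q.rep * N v b.rep)
    (fun v x hx y hy => hexc q v x (Finset.mem_of_mem_erase hx) y (Finset.mem_of_mem_erase hy))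
    (by omega)
  have hb' := Finset.mem_of_mem_erase hb'e
  have hne : b ≠ b' := (Finset.ne_of_mem_erase hb'e).symm
  have hpb : p ≠ b := fun h => hp (h ▸ hb)
  have hqb : q ≠ b' := fun h => hq (h ▸ hb')
  have hm := hmain b hb b' hb' hne
  have hcf := cross_formula T hpq hne hpb hqb
  have hDbb := DT_nonneg T hne
  have hbound : ∀ v ∈ (Finset.univ : Finset (SPl K T)),
      (mPl T v : ℝ) * (Real.log (fPl T v (wdg p.rep q.rep)) +
      Real.log (fPl T v (wdg b.rep b'.rep)) - Real.log (fPl T v (wdg p.rep b.rep)) -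
      Real.log (fPl T v (wdg q.rep b'.rep))) ≤ 18 * η := by
    intro v _
    have p1 := (fPl T v).pos (wdg_rep_ne hpq)
    have p2 := (fPl T v).pos (wdg_rep_ne hne)
    have p3 := (fPl T v).pos (wdg_rep_ne hpb)
    have p4 := (fPl T v).pos (wdg_rep_ne hqb)
    have g1 := not_lt.1 (hbgood v)
    have g2 := not_lt.1 (hbgood' v)
    have g3 := hNup v p.rep q.rep
    have g4 := hNup v b.rep b'.rep
    have np := hrep v p
    have nq := hrep v q
    have nb := hrep v b
    have nb' := hrep v b'
    have hrv := hr v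
    have hE := Real.exp_pos η
    have key : fPl T v (wdg p.rep q.rep) * fPl T v (wdg b.rep b'.rep) ≤
        1024 * (Real.exp η * Real.exp η) *
          (fPl T v (wdg p.rep b.rep) * fPl T v (wdg q.rep b'.rep)) := by
      have m1 := mul_le_mul g3 g4 (mul_pos hrv p2).le (by positivity)
      have m2 := mul_le_mul g1 g2 (by positivity) (by positivity)
      have : (r v * r v) * (fPl T v (wdg p.rep q.rep) * fPl T v (wdg b.rep b'.rep)) ≤
          (r v * r v) * (1024 * (Real.exp η * Real.exp η) *
          (fPl T v (wdg p.rep b.rep) * fPl T v (wdg q.rep b'.rep))) := by nlinarith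
      exact le_of_mul_le_mul_left this (mul_pos hrv hrv)
    have hlog := Real.log_le_log (mul_pos p1 p2) key
    rw [Real.log_mul p1.ne' p2.ne', Real.log_mul (by positivity) (mul_pos p3 p4).ne',
      Real.log_mul (by norm_num) (mul_pos hE hE).ne', Real.log_mul hE.ne' hE.ne',
      Real.log_mul p3.ne' p4.ne', Real.log_exp] at hlog
    have h1024 : Real.log 1024 ≤ 7 := by
      have : Real.log 1024 = 10 * Real.log 2 := by
        rw [show (1024 : ℝ) = 2 ^ 10 by norm_num, Real.log_pow]; norm_num
      rw [this]
      have := Real.log_two_lt_d9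
      linarith
    have hx : Real.log (fPl T v (wdg p.rep q.rep)) +
      Real.log (fPl T v (wdg b.rep b'.rep)) - Real.log (fPl T v (wdg p.rep b.rep)) -
      Real.log (fPl T v (wdg q.rep b'.rep)) ≤ 9 * η := by linarith
    have := mPl_bounds T v
    nlinarith
  have hsum := Finset.sum_le_sum hbound
  rw [hcf, Finset.sum_const, Finset.card_univ, hcard, nsmul_eq_mul] at hsum
  have h1 : H / 4 ≤ s * (18 * η) := by linarith
  have h2 : η * n = 2 * H := by rw [hη]; field_simp
  have h3 : (n : ℝ) = 200 * s - 1 := by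
    rw [hn, Nat.cast_sub (by omega)]; push_cast; ring
  have h4 : (1 : ℝ) ≤ s := by exact_mod_cast hs
  rw [h3] at h2
  nlinarith

lemma inf_unique {P Q : P1 K} (h1 : P.rep 1 = 0) (h2 : Q.rep 1 = 0) : P = Q := by
  by_contra h
  apply wdg_rep_ne h
  rw [wdg, h1, h2]; ring

lemma card_drop_inf (A : Finset (P1 K)) (n : ℕ) (h : n + 1 ≤ A.card) :
    n ≤ (A.filter (fun P => P.rep 1 ≠ 0)).card := by
  have h1 := Finset.card_filter_add_card_filter_not (s := A) (fun P : P1 K => P.rep 1 ≠ 0)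
  have h2 : (A.filter (fun P : P1 K => ¬ P.rep 1 ≠ 0)).card ≤ 1 := by
    rw [Finset.card_le_one]
    intro a ha b hb
    simp only [Finset.mem_filter, not_not] at ha hb
    exact inf_unique ha.2 hb.2
  omega

/-- The bound `N` of the abstract lemma. -/
def Nbd (s : ℕ) : ℕ := (10 ^ 7) ^ s * (200 * s) + 1

lemma lem3 (T : Finset (HeightOneSpectrum (𝓞 K))) (A B : Finset (P1 K))
    (hdisj : Disjoint A B) (cA : Nbd (sCard K T) ≤ A.card) (cB : Nbd (sCard K T) ≤ B.card) (H : ℝ)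
    (hH : ∀ b ∈ B, ∑ a ∈ A, DT T a b ≤ H)
    (hpq : H ≤ 0 ∨ ∃ p q, p ≠ q ∧ p ∉ B ∧ q ∉ B ∧ ∀ b ∈ B, ∀ b' ∈ B, b ≠ b' →
      H / 4 ≤ DT T p q - DT T p b - DT T q b') : False := by
  have cA' := card_drop_inf A _ cA
  have cB' := card_drop_inf B _ cB
  obtain ⟨A', hA', B', hB', h1, h2, h3⟩ := sel_all T (fun P : P1 K => P.rep) _ _ _
    (fun i hi => (Finset.mem_filter.1 hi).2) (fun i hi => (Finset.mem_filter.1 hi).2)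
    (fun i _ j _ h => by by_contra hne; exact wdg_rep_ne hne h) cA' cB'
  have hA'' : A' ⊆ A := hA'.trans (Finset.filter_subset _ _)
  have hB'' : B' ⊆ B := hB'.trans (Finset.filter_subset _ _)
  refine lem3_core T A' B' (Finset.disjoint_of_subset_left hA''
    (Finset.disjoint_of_subset_right hB'' hdisj)) h3 h1 h2 H ?_ ?_
  · intro b hb
    refine (Finset.sum_le_sum_of_subset_of_nonneg hA'' ?_).trans (hH b (hB'' hb))
    intro a ha _
    exact DT_nonneg T (fun h => Finset.disjoint_left.1 hdisj ha (h ▸ hB'' hb))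
  · rcases hpq with h | ⟨p, q, e1, e2, e3, e4⟩
    · exact Or.inl h
    · exact Or.inr ⟨p, q, e1, fun h => e2 (hB'' h), fun h => e3 (hB'' h),
        fun b hb b' hb' => e4 b (hB'' hb) b' (hB'' hb')⟩

end

noncomputable section
variable {K : Type*} [Field K] [NumberField K]

/-- binary forms with `v`-integral coefficients, as functions -/
inductive IntForm (v : HeightOneSpectrum (𝓞 K)) : ℕ → (K → K → K) → Prop
  | mono (c : K) (hc : HeightOneSpectrum.adicAbv K v c ≤ 1) (n i j : ℕ) (h : i + j = n) :
      IntForm v n (fun x y => c * x ^ i * y ^ j)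
  | add (n : ℕ) (f g : K → K → K) (hf : IntForm v n f) (hg : IntForm v n g) :
      IntForm v n (fun x y => f x y + g x y)

lemma IntForm.zero (v : HeightOneSpectrum (𝓞 K)) (n : ℕ) : IntForm v n (fun _ _ => 0) := by
  have := IntForm.mono (v := v) 0 (by simp) n n 0 (by simp)
  simpa using this

lemma IntForm.sum {ι : Type*} (v : HeightOneSpectrum (𝓞 K)) (n : ℕ) (S : Finset ι)
    (f : ι → K → K → K) (h : ∀ i ∈ S, IntForm v n (f i)) :
    IntForm v n (fun x y => ∑ i ∈ S, f i x y) := by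
  induction S using Finset.induction_on with
  | empty => simpa using IntForm.zero v n
  | insert a S ha ih =>
    simp only [Finset.sum_insert ha]
    exact IntForm.add n _ _ (h a (Finset.mem_insert_self _ _))
      (ih (fun i hi => h i (Finset.mem_insert_of_mem hi)))

lemma IntForm.smul {v : HeightOneSpectrum (𝓞 K)} {n : ℕ} {f : K → K → K} (h : IntForm v n f)
    {c : K} (hc : HeightOneSpectrum.adicAbv K v c ≤ 1) : IntForm v n (fun x y => c * f x y) := by
  induction h with
  | mono e he n i j h =>
    have := IntForm.mono (v := v) (c * e) (by
      rw [map_mul]; exact mul_le_one₀ hc (AbsoluteValue.nonneg _ _) he) n i j h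
    simpa only [mul_assoc] using this
  | add n f g _ _ ihf ihg =>
    simp only [mul_add]
    exact IntForm.add n _ _ ihf ihg

lemma IntForm.swap {v : HeightOneSpectrum (𝓞 K)} {n : ℕ} {f : K → K → K} (h : IntForm v n f) :
    IntForm v n (fun x y => f y x) := by
  induction h with
  | mono e he n i j h =>
    have := IntForm.mono (v := v) e he n j i (by omega)
    convert this using 3
    ring
  | add n f g _ _ ihf ihg => exact IntForm.add n _ _ ihf ihg

lemma IntForm.le_one {v : HeightOneSpectrum (𝓞 K)} {n : ℕ} {f : K → K → K} (h : IntForm v n f)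
    {x y : K} (hx : HeightOneSpectrum.adicAbv K v x ≤ 1)
    (hy : HeightOneSpectrum.adicAbv K v y ≤ 1) : HeightOneSpectrum.adicAbv K v (f x y) ≤ 1 := by
  induction h with
  | mono e he n i j h =>
    simp only [map_mul, map_pow]
    exact mul_le_one₀ (mul_le_one₀ he (by positivity) (pow_le_one₀ (AbsoluteValue.nonneg _ _) hx))
      (by positivity) (pow_le_one₀ (AbsoluteValue.nonneg _ _) hy)
  | add n f g _ _ ihf ihg =>
    exact (HeightOneSpectrum.adicAbv_add_le_max K v _ _).trans (max_le ihf ihg)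

lemma IntForm.const {v : HeightOneSpectrum (𝓞 K)} {n : ℕ} {f : K → K → K} (h : IntForm v n f)
    (hn : n = 0) (x y x' y' : K) : f x y = f x' y' := by
  induction h with
  | mono e he n i j h =>
    obtain ⟨rfl, rfl⟩ : i = 0 ∧ j = 0 := by omega
    simp
  | add n f g _ _ ihf ihg => simp only [ihf hn, ihg hn]

lemma IntForm.div {v : HeightOneSpectrum (𝓞 K)} {n : ℕ} {f : K → K → K} (h : IntForm v n f)
    (d : ℕ) (hn : n = d + 1) {α : K} (hα : HeightOneSpectrum.adicAbv K v α ≤ 1) :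
    ∃ g, IntForm v d g ∧ ∀ x y, f x y - y ^ (d + 1) * f α 1 = (x - α * y) * g x y := by
  induction h with
  | mono e he n i j h =>
    refine ⟨fun x y => ∑ k ∈ Finset.range i, e * α ^ (i - 1 - k) * x ^ k * y ^ (i - 1 - k + j),
      ?_, ?_⟩
    · apply IntForm.sum
      intro k hk
      have := Finset.mem_range.1 hk
      apply IntForm.mono
      · rw [map_mul, map_pow]
        exact mul_le_one₀ he (by positivity) (pow_le_one₀ (AbsoluteValue.nonneg _ _) hα)
      · omega
    · intro x y
      have hg := geom_sum₂_mul x (α * y) i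
      have : ∑ k ∈ Finset.range i, e * α ^ (i - 1 - k) * x ^ k * y ^ (i - 1 - k + j) =
          e * y ^ j * ∑ k ∈ Finset.range i, x ^ k * (α * y) ^ (i - 1 - k) := by
        rw [Finset.mul_sum]
        apply Finset.sum_congr rfl
        intro k _
        rw [mul_pow, pow_add]; ring
      beta_reduce
      rw [this]
      have h2 : y ^ (d + 1) = y ^ i * y ^ j := by rw [← pow_add, h, hn]
      rw [h2]
      have h3 : x ^ i - (α * y) ^ i = x ^ i - α ^ i * y ^ i := by rw [mul_pow]
      rw [h3] at hg
      linear_combination (-e * y ^ j) * hg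
  | add n f g _ _ ihf ihg =>
    obtain ⟨a, ha, ea⟩ := ihf hn
    obtain ⟨b, hb, eb⟩ := ihg hn
    refine ⟨fun x y => a x y + b x y, IntForm.add d _ _ ha hb, ?_⟩
    intro x y
    linear_combination ea x y + eb x y

/-- normalized vectors -/
def Nmz (v : HeightOneSpectrum (𝓞 K)) (u : Fin 2 → K) : Prop :=
  (u 1 = 1 ∧ HeightOneSpectrum.adicAbv K v (u 0) ≤ 1) ∨
  (u 0 = 1 ∧ HeightOneSpectrum.adicAbv K v (u 1) ≤ 1)

lemma Nmz.le0 {v : HeightOneSpectrum (𝓞 K)} {u : Fin 2 → K} (h : Nmz v u) :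
    HeightOneSpectrum.adicAbv K v (u 0) ≤ 1 := by
  rcases h with h | h
  · exact h.2
  · rw [h.1]; simp

lemma Nmz.le1 {v : HeightOneSpectrum (𝓞 K)} {u : Fin 2 → K} (h : Nmz v u) :
    HeightOneSpectrum.adicAbv K v (u 1) ≤ 1 := by
  rcases h with h | h
  · rw [h.1]; simp
  · exact h.2

lemma Nmz.ne {v : HeightOneSpectrum (𝓞 K)} {u : Fin 2 → K} (h : Nmz v u) : u ≠ 0 := by
  rintro rfl
  rcases h with h | h <;> simp at h

lemma Nmz.nrm {v : HeightOneSpectrum (𝓞 K)} {u : Fin 2 → K} (h : Nmz v u) : nrm v u = 1 := by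
  rw [_root_.nrm]
  rcases h with h | h
  · rw [h.1, map_one]; exact max_eq_right h.2
  · rw [h.1, map_one]; exact max_eq_left h.2

lemma exists_nmz (v : HeightOneSpectrum (𝓞 K)) (P : P1 K) :
    ∃ (u : Fin 2 → K) (hu : u ≠ 0), Nmz v u ∧ Projectivization.mk K u hu = P := by
  have key : ∀ c : K, c ≠ 0 → Nmz v (c • P.rep) →
      ∃ (u : Fin 2 → K) (hu : u ≠ 0), Nmz v u ∧ Projectivization.mk K u hu = P := by
    intro c hc h
    refine ⟨_, h.ne, h, ?_⟩
    conv_rhs => rw [← P.mk_rep]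
    rw [Projectivization.mk_eq_mk_iff']
    exact ⟨c, rfl⟩
  have hn := nrm_pos v P.rep_nonzero
  rcases le_total (HeightOneSpectrum.adicAbv K v (P.rep 0))
      (HeightOneSpectrum.adicAbv K v (P.rep 1)) with h | h
  · have hp : 0 < HeightOneSpectrum.adicAbv K v (P.rep 1) := by
      rw [nrm, max_eq_right h] at hn; exact hn
    have h1 : P.rep 1 ≠ 0 := by intro e; rw [e] at hp; simp at hp
    apply key (P.rep 1)⁻¹ (inv_ne_zero h1)
    left
    simp only [Pi.smul_apply, smul_eq_mul, map_mul, map_inv₀]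
    refine ⟨inv_mul_cancel₀ h1, ?_⟩
    rw [inv_mul_le_iff₀ hp]; simpa using h
  · have hp : 0 < HeightOneSpectrum.adicAbv K v (P.rep 0) := by
      rw [nrm, max_eq_left h] at hn; exact hn
    have h1 : P.rep 0 ≠ 0 := by intro e; rw [e] at hp; simp at hp
    apply key (P.rep 0)⁻¹ (inv_ne_zero h1)
    right
    simp only [Pi.smul_apply, smul_eq_mul, map_mul, map_inv₀]
    refine ⟨inv_mul_cancel₀ h1, ?_⟩
    rw [inv_mul_le_iff₀ hp]; simpa using h

lemma form_prod {ι : Type*} (v : HeightOneSpectrum (𝓞 K)) (S : Finset ι) (vec : ι → Fin 2 → K)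
    (y : Fin 2 → K) (hy0 : HeightOneSpectrum.adicAbv K v (y 0) ≤ 1)
    (hy1 : HeightOneSpectrum.adicAbv K v (y 1) ≤ 1) (hS : ∀ x ∈ S, Nmz v (vec x))
    (hd : ∀ x ∈ S, ∀ x' ∈ S, x ≠ x' → wdg (vec x) (vec x') ≠ 0) :
    ∀ (n : ℕ) (f : K → K → K), IntForm v n f → (∀ x ∈ S, f (vec x 0) (vec x 1) = 0) →
    HeightOneSpectrum.adicAbv K v (f (y 0) (y 1)) ≤
      ∏ x ∈ S, HeightOneSpectrum.adicAbv K v (wdg (vec x) y) := by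
  induction S using Finset.induction_on with
  | empty => intro n f hf _; simpa using hf.le_one hy0 hy1
  | insert a S ha ih =>
    intro n f hf h0
    have ih' := ih (fun x hx => hS x (Finset.mem_insert_of_mem hx))
      (fun x hx x' hx' => hd x (Finset.mem_insert_of_mem hx) x' (Finset.mem_insert_of_mem hx'))
    have ha0 := h0 a (Finset.mem_insert_self _ _)
    rcases n with _ | m
    · rw [hf.const rfl _ _ (vec a 0) (vec a 1), ha0, map_zero]
      exact Finset.prod_nonneg (fun _ _ => AbsoluteValue.nonneg _ _)
    · obtain ⟨g, hg, e⟩ : ∃ g, IntForm v m g ∧ ∀ u : Fin 2 → K,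
          f (u 0) (u 1) = wdg (vec a) u * g (u 0) (u 1) := by
        rcases hS a (Finset.mem_insert_self _ _) with h | h
        · obtain ⟨g, hg, e⟩ := hf.div m rfl h.2
          rw [h.1] at ha0
          refine ⟨fun x y => (-1) * g x y, hg.smul (by simp), ?_⟩
          intro u
          have := e (u 0) (u 1)
          rw [ha0] at this
          rw [wdg, h.1]
          linear_combination this
        · obtain ⟨g, hg, e⟩ := hf.swap.div m rfl h.2
          rw [h.1] at ha0
          refine ⟨fun x y => g y x, hg.swap, ?_⟩
          intro u
          have := e (u 1) (u 0)
          rw [ha0] at this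
          rw [wdg, h.1]
          linear_combination this
      rw [Finset.prod_insert ha, e y, map_mul]
      refine mul_le_mul_of_nonneg_left (ih' m g hg ?_) (AbsoluteValue.nonneg _ _)
      intro x hx
      have h1 := h0 x (Finset.mem_insert_of_mem hx)
      rw [e (vec x)] at h1
      exact (mul_eq_zero.1 h1).resolve_left (hd a (Finset.mem_insert_self _ _) x
        (Finset.mem_insert_of_mem hx) (fun h => ha (h ▸ hx)))

lemma intForm_of_poly (v : HeightOneSpectrum (𝓞 K)) (p : MvPolynomial (Fin 2) K) (d : ℕ)
    (hp : p.IsHomogeneous d) (hc : ∀ m, HeightOneSpectrum.adicAbv K v (p.coeff m) ≤ 1) :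
    IntForm v d (fun x y => eval ![x, y] p) := by
  have : (fun x y => eval ![x, y] p) = fun x y => ∑ m ∈ p.support,
      p.coeff m * x ^ (m 0) * y ^ (m 1) := by
    funext x y
    rw [eval_eq']
    apply Finset.sum_congr rfl
    intro m _
    simp [Fin.prod_univ_two, mul_assoc]
  rw [this]
  apply IntForm.sum
  intro m hm
  apply IntForm.mono _ (hc m)
  have := hp (mem_support_iff.1 hm)
  rw [Finsupp.weight_apply, Finsupp.sum_fintype _ _ (by simp)] at this
  simpa [Fin.sum_univ_two] using this

end

noncomputable section
variable {K : Type*} [Field K] [NumberField K] {d : ℕ}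

/-- the lift of `φ` to vectors -/
def Phi (φ : P1Map K d) (u : Fin 2 → K) : Fin 2 → K :=
  ![eval ![u 0, u 1] φ.F, eval ![u 0, u 1] φ.G]

lemma vec_eta (u : Fin 2 → K) : ![u 0, u 1] = u := by
  ext i; fin_cases i <;> rfl

lemma Phi_ne (φ : P1Map K d) {u : Fin 2 → K} (hu : u ≠ 0) : Phi φ u ≠ 0 := by
  intro h
  have h0 : eval ![u 0, u 1] φ.F = 0 := congrFun h 0
  have h1 : eval ![u 0, u 1] φ.G = 0 := congrFun h 1
  have e : ∀ p : MvPolynomial (Fin 2) K, eval ![u 0, u 1] p = 0 →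
      aeval ![algebraMap K (AlgebraicClosure K) (u 0), algebraMap K (AlgebraicClosure K) (u 1)] p
        = 0 := by
    intro p hp
    have e1 : ![algebraMap K (AlgebraicClosure K) (u 0), algebraMap K (AlgebraicClosure K) (u 1)] =
        algebraMap K (AlgebraicClosure K) ∘ ![u 0, u 1] := by
      ext i; fin_cases i <;> rfl
    rw [e1, aeval_algebraMap_apply, aeval_eq_eval, hp, map_zero]
  obtain ⟨a, b⟩ := φ.coprime _ _ (e _ h0) (e _ h1)
  apply hu
  ext i
  fin_cases i
  · simpa using a
  · simpa using b

lemma toFun_mk (φ : P1Map K d) {u : Fin 2 → K} (hu : u ≠ 0) :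
    φ.toFun (Projectivization.mk K u hu) = Projectivization.mk K (Phi φ u) (Phi_ne φ hu) := by
  have hu' : ![u 0, u 1] ≠ 0 := by rwa [vec_eta]
  have := φ.compat (u 0) (u 1) hu' (Phi_ne φ hu)
  rw [← show Projectivization.mk K u hu = Projectivization.mk K ![u 0, u 1] hu' by
    congr 1; exact (vec_eta u).symm] at this
  exact this

lemma adic_le_one_iff (v : HeightOneSpectrum (𝓞 K)) (x : K) :
    HeightOneSpectrum.adicAbv K v x ≤ 1 ↔ v.valuation K x ≤ 1 := by
  rw [HeightOneSpectrum.adicAbv_def, ← WithZeroMulInt.toNNReal_le_one_iff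
    (HeightOneSpectrum.one_lt_absNorm_nnreal v)]
  norm_cast

lemma adic_lt_one_iff (v : HeightOneSpectrum (𝓞 K)) (x : K) :
    HeightOneSpectrum.adicAbv K v x < 1 ↔ v.valuation K x < 1 := by
  rw [HeightOneSpectrum.adicAbv_def, ← WithZeroMulInt.toNNReal_lt_one_iff
    (HeightOneSpectrum.one_lt_absNorm_nnreal v)]
  norm_cast

lemma good_forms (φ : P1Map K d) (v : HeightOneSpectrum (𝓞 K)) (h : GoodReductionAt φ v) :
    ∃ c : K, c ≠ 0 ∧ IntForm v d (fun x y => c * eval ![x, y] φ.F) ∧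
      IntForm v d (fun x y => c * eval ![x, y] φ.G) ∧
      ∀ u, Nmz v u → nrm v (c • Phi φ u) = 1 := by
  obtain ⟨c, hc, F₀, G₀, hF, hG, -, hred⟩ := h
  have key : ∀ (p : MvPolynomial (Fin 2) K) (p₀ : MvPolynomial (Fin 2)
      (v.valuation (K := K)).valuationSubring), p.IsHomogeneous d →
      MvPolynomial.map ((v.valuation (K := K)).valuationSubring.subtype) p₀ = C c * p →
      IntForm v d (fun x y => c * eval ![x, y] p) := by
    intro p p₀ hp e
    have h1 := intForm_of_poly v (C c * p) d (hp.C_mul c) (by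
      intro m
      rw [← e, coeff_map, adic_le_one_iff]
      exact (p₀.coeff m).2)
    simpa using h1
  have kF := key _ _ φ.homF hF
  have kG := key _ _ φ.homG hG
  refine ⟨c, hc, kF, kG, ?_⟩
  intro u hu
  have hle : nrm v (c • Phi φ u) ≤ 1 := by
    rw [nrm]
    exact max_le (kF.le_one hu.le0 hu.le1) (kG.le_one hu.le0 hu.le1)
  by_contra hne
  have hlt := lt_of_le_of_ne hle hne
  rw [nrm, max_lt_iff] at hlt
  set x₀ : (v.valuation (K := K)).valuationSubring := ⟨u 0, (adic_le_one_iff v _).1 hu.le0⟩ with hx0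
  set y₀ : (v.valuation (K := K)).valuationSubring := ⟨u 1, (adic_le_one_iff v _).1 hu.le1⟩ with hy0
  set ρ := (algebraMap (IsLocalRing.ResidueField (v.valuation (K := K)).valuationSubring)
              (AlgebraicClosure (IsLocalRing.ResidueField
                (v.valuation (K := K)).valuationSubring))).comp
            (IsLocalRing.residue (v.valuation (K := K)).valuationSubring) with hρ
  have key2 : ∀ (p : MvPolynomial (Fin 2) K) (p₀ : MvPolynomial (Fin 2)
      (v.valuation (K := K)).valuationSubring),
      MvPolynomial.map ((v.valuation (K := K)).valuationSubring.subtype) p₀ = C c * p →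
      HeightOneSpectrum.adicAbv K v (c * eval ![u 0, u 1] p) < 1 →
      eval ![ρ x₀, ρ y₀] (MvPolynomial.map ρ p₀) = 0 := by
    intro p p₀ e hl
    have e1 : ![ρ x₀, ρ y₀] = ρ ∘ ![x₀, y₀] := by ext i; fin_cases i <;> rfl
    rw [e1, ← map_eval ρ]
    have e2 : ((eval ![x₀, y₀] p₀ : (v.valuation (K := K)).valuationSubring) : K) =
        c * eval ![u 0, u 1] p := by
      have : (v.valuation (K := K)).valuationSubring.subtype (eval ![x₀, y₀] p₀) =
        c * eval ![u 0, u 1] p := by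
        rw [map_eval, e, eval_mul, eval_C]
        congr 3
        ext i; fin_cases i <;> rfl
      exact this
    have e3 : eval ![x₀, y₀] p₀ ∈
        IsLocalRing.maximalIdeal (v.valuation (K := K)).valuationSubring := by
      rw [Valuation.mem_maximalIdeal_iff, e2]
      exact (adic_lt_one_iff v _).1 hl
    rw [hρ, RingHom.comp_apply, (IsLocalRing.residue_eq_zero_iff _).2 e3, map_zero]
  obtain ⟨a, b⟩ := hred (ρ x₀) (ρ y₀) (key2 _ _ hF hlt.1) (key2 _ _ hG hlt.2)
  rcases hu with h | h
  · have : y₀ = 1 := by ext; exact h.1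
    rw [this, map_one] at b
    exact one_ne_zero b
  · have : x₀ = 1 := by ext; exact h.1
    rw [this, map_one] at a
    exact one_ne_zero a

lemma F1_local (φ : P1Map K d) (v : HeightOneSpectrum (𝓞 K)) (h : GoodReductionAt φ v)
    (S : Finset (P1 K)) (z Y : P1 K) (hS : ∀ x ∈ S, φ.toFun x = z) (hY : φ.toFun Y ≠ z) :
    ∑ x ∈ S, dP v x Y ≤ dP v z (φ.toFun Y) := by
  obtain ⟨c, hc, kF, kG, hn⟩ := good_forms φ v h
  choose nz hnz hNmz hmk using exists_nmz v
  have hYx : ∀ x ∈ S, x ≠ Y := fun x hx e => hY (e ▸ hS x hx)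
  have hw : ∀ P Q : P1 K, P ≠ Q → wdg (nz P) (nz Q) ≠ 0 := by
    intro P Q hPQ e
    obtain ⟨a, ha, ea⟩ := wdg_zero_prop (hnz P) (hnz Q) e
    apply hPQ
    rw [← hmk P, ← hmk Q, Projectivization.mk_eq_mk_iff']
    exact ⟨a, ea.symm⟩
  have hd : ∀ P Q : P1 K, P ≠ Q → dP v P Q =
      - Real.log (HeightOneSpectrum.adicAbv K v (wdg (nz P) (nz Q))) := by
    intro P Q hPQ
    have := dP_mk v (hnz P) (hnz Q) (hw P Q hPQ)
    rw [hmk, hmk] at this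
    rw [this, dl, (hNmz P).nrm, (hNmz Q).nrm]
    simp
  have hφ : ∀ P, φ.toFun P = Projectivization.mk K (c • Phi φ (nz P))
      (smul_ne_zero hc (Phi_ne φ (hnz P))) := by
    intro P
    conv_lhs => rw [← hmk P]
    rw [toFun_mk, Projectivization.mk_eq_mk_iff']
    exact ⟨c⁻¹, by rw [smul_smul, inv_mul_cancel₀ hc, one_smul]⟩
  have hwz : ∀ P, φ.toFun P ≠ z → wdg (nz z) (c • Phi φ (nz P)) ≠ 0 := by
    intro P hP e
    obtain ⟨a, ha, ea⟩ := wdg_zero_prop (hnz z) (smul_ne_zero hc (Phi_ne φ (hnz P))) e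
    apply hP
    rw [hφ, ← hmk z, Projectivization.mk_eq_mk_iff']
    refine ⟨a⁻¹, ?_⟩
    rw [ea, smul_smul, inv_mul_cancel₀ ha, one_smul]
  have hwz' : ∀ P, φ.toFun P = z → wdg (nz z) (c • Phi φ (nz P)) = 0 := by
    intro P hP
    rw [hφ, ← hmk z, Projectivization.mk_eq_mk_iff'] at hP
    obtain ⟨a, ea⟩ := hP
    rw [← ea, wdg_smul_right, wdg_self, mul_zero]
  have hform : IntForm v d (fun x y => nz z 0 * (c * eval ![x, y] φ.G) +
      (- nz z 1) * (c * eval ![x, y] φ.F)) := by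
    apply IntForm.add
    · exact kG.smul (hNmz z).le0
    · exact kF.smul (by rw [AbsoluteValue.map_neg]; exact (hNmz z).le1)
  have hfe : ∀ u : Fin 2 → K, nz z 0 * (c * eval ![u 0, u 1] φ.G) +
      (- nz z 1) * (c * eval ![u 0, u 1] φ.F) = wdg (nz z) (c • Phi φ u) := by
    intro u
    simp [wdg, Phi]; ring
  have main := form_prod v S nz (nz Y) (hNmz Y).le0 (hNmz Y).le1 (fun x _ => hNmz x)
    (fun x _ x' _ hne => hw x x' hne) d _ hform (by
      intro x hx
      beta_reduce
      rw [hfe, hwz' x (hS x hx)])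
  rw [hfe] at main
  have hpos := AbsoluteValue.pos (HeightOneSpectrum.adicAbv K v) (hwz Y hY)
  have e1 : dP v z (φ.toFun Y) =
      - Real.log (HeightOneSpectrum.adicAbv K v (wdg (nz z) (c • Phi φ (nz Y)))) := by
    have := dP_mk v (hnz z) (smul_ne_zero hc (Phi_ne φ (hnz Y))) (hwz Y hY)
    rw [hmk, ← hφ] at this
    rw [this, dl, (hNmz z).nrm, hn _ (hNmz Y)]
    simp
  rw [e1, Finset.sum_congr rfl (fun x hx => hd x Y (hYx x hx)), Finset.sum_neg_distrib,
    ← Real.log_prod (fun x hx => (AbsoluteValue.pos _ (hw x Y (hYx x hx))).ne'), neg_le_neg_iff]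
  exact Real.log_le_log hpos main

lemma F1_iter (φ : P1Map K d) (v : HeightOneSpectrum (𝓞 K)) (h : GoodReductionAt φ v) (k : ℕ) :
    ∀ (S : Finset (P1 K)) (z Y : P1 K), (∀ x ∈ S, φ.toFun^[k] x = z) → φ.toFun^[k] Y ≠ z →
    ∑ x ∈ S, dP v x Y ≤ dP v z (φ.toFun^[k] Y) := by
  induction k with
  | zero =>
    intro S z Y hS hY
    simp only [Function.iterate_zero, id] at hS hY ⊢
    have hsub : S ⊆ {z} := fun x hx => Finset.mem_singleton.2 (hS x hx)
    refine (Finset.sum_le_sum_of_subset_of_nonneg hsub ?_).trans (by simp)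
    intro x hx _
    rw [Finset.mem_singleton.1 hx]
    exact dP_nonneg v hY.symm
  | succ k ih =>
    intro S z Y hS hY
    simp only [Function.iterate_succ_apply] at hS hY ⊢
    refine le_trans ?_ (ih (S.image φ.toFun) z (φ.toFun Y) ?_ hY)
    · rw [← Finset.sum_fiberwise_of_maps_to (g := φ.toFun) (t := S.image φ.toFun)
        (fun x hx => Finset.mem_image_of_mem _ hx)]
      apply Finset.sum_le_sum
      intro w hw
      apply F1_local φ v h
      · intro x hx; exact (Finset.mem_filter.1 hx).2
      · rintro rfl
        obtain ⟨x, hx, e⟩ := Finset.mem_image.1 hw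
        apply hY
        rw [← e]; exact hS x hx
    · intro w hw
      obtain ⟨x, hx, rfl⟩ := Finset.mem_image.1 hw
      exact hS x hx

lemma F1_glob (φ : P1Map K d) (T : Finset (HeightOneSpectrum (𝓞 K)))
    (h : GoodReductionOutside φ T) (k : ℕ)
    (S : Finset (P1 K)) (z Y : P1 K) (hS : ∀ x ∈ S, φ.toFun^[k] x = z) (hY : φ.toFun^[k] Y ≠ z) :
    ∑ x ∈ S, DT T x Y ≤ DT T z (φ.toFun^[k] Y) :=
  DT_le T S (fun x => x) (fun _ => Y) _ _ (fun v hv => F1_iter φ v (h v hv) k S z Y hS hY)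

lemma U_glob (φ : P1Map K d) (T : Finset (HeightOneSpectrum (𝓞 K)))
    (h : GoodReductionOutside φ T) (k : ℕ) (P X : P1 K) (hP : φ.toFun P = P)
    (h2 : φ.toFun^[k] X ≠ P) (h3 : φ.toFun^[k] X ≠ X) :
    DT T X P ≤ DT T X (φ.toFun^[k] X) := by
  have hPk : φ.toFun^[k] P = P := Function.iterate_fixed hP k
  have h1 : X ≠ P := fun e => h2 (by rw [e]; exact hPk)
  have := DT_le T {()} (fun _ => X) (fun _ => P) X (φ.toFun^[k] X) (by
    intro v hv
    have e := F1_iter φ v (h v hv) k {P} P X (by simpa using hPk) h2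
    simp only [Finset.sum_singleton] at e ⊢
    have u := dP_ultra v h1 h2.symm h3.symm
    rw [dP_comm v P X] at e
    rwa [min_eq_left e] at u)
  simpa using this

lemma dP_periodic (φ : P1Map K d) (v : HeightOneSpectrum (𝓞 K)) (h : GoodReductionAt φ v)
    {X Y : P1 K} (hX : X ∈ Function.periodicPts φ.toFun) (hY : Y ∈ Function.periodicPts φ.toFun)
    (hne : X ≠ Y) : φ.toFun X ≠ φ.toFun Y ∧ dP v (φ.toFun X) (φ.toFun Y) = dP v X Y := by
  have hne' : φ.toFun X ≠ φ.toFun Y := fun e =>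
    hne ((Function.bijOn_periodicPts φ.toFun).injOn hX hY e)
  refine ⟨hne', ?_⟩
  have mono : ∀ (k : ℕ) (A B : P1 K), φ.toFun^[k] A ≠ φ.toFun^[k] B →
      dP v A B ≤ dP v (φ.toFun^[k] A) (φ.toFun^[k] B) := by
    intro k A B hAB
    simpa using F1_iter φ v h k {A} (φ.toFun^[k] A) B (by simp) hAB.symm
  apply le_antisymm
  · obtain ⟨m, hm, em⟩ := hX
    obtain ⟨n, hn, en⟩ := hY
    have e1 : φ.toFun^[m * n - 1] (φ.toFun X) = X := by
      rw [← Function.iterate_succ_apply, Nat.succ_eq_add_one, Nat.sub_add_cancel (Nat.mul_pos hm hn)]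
      exact em.mul_const n
    have e2 : φ.toFun^[m * n - 1] (φ.toFun Y) = Y := by
      rw [← Function.iterate_succ_apply, Nat.succ_eq_add_one, Nat.sub_add_cancel (Nat.mul_pos hm hn)]
      exact en.const_mul m
    have := mono (m * n - 1) (φ.toFun X) (φ.toFun Y) (by rwa [e1, e2])
    rwa [e1, e2] at this
  · exact mono 1 X Y hne'

end

section tails
variable {X : Type*}

/-- abstract system of distances -/
structure TailSys (f : X → X) (D : X → X → ℝ) (N : ℕ) : Prop where
  nn : ∀ x y, x ≠ y → 0 ≤ D x y
  sym : ∀ x y, D x y = D y x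
  F1 : ∀ (k : ℕ) (S : Finset X) (z Y : X), (∀ x ∈ S, f^[k] x = z) → f^[k] Y ≠ z →
    ∑ x ∈ S, D x Y ≤ D z (f^[k] Y)
  U : ∀ (k : ℕ) (P Y : X), f P = P → f^[k] Y ≠ P → f^[k] Y ≠ Y → D Y P ≤ D Y (f^[k] Y)
  L3 : ∀ (A B : Finset X), Disjoint A B → N ≤ A.card → N ≤ B.card → ∀ H : ℝ,
    (∀ b ∈ B, ∑ a ∈ A, D a b ≤ H) →
    (H ≤ 0 ∨ ∃ p q, p ≠ q ∧ p ∉ B ∧ q ∉ B ∧ ∀ b ∈ B, ∀ b' ∈ B, b ≠ b' →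
      H / 4 ≤ D p q - D p b - D q b') → False
  hN : 8 ≤ N

/-- `Y` reaches the periodic set after exactly `l` steps, and has shadow `P` -/
def Lv (f : X → X) (Y P : X) (l : ℕ) : Prop :=
  P ∈ Function.periodicPts f ∧ f^[l] Y = f^[l] P ∧ ∀ m < l, f^[m] Y ∉ Function.periodicPts f

lemma per_iter {f : X → X} {P : X} (h : P ∈ Function.periodicPts f) (k : ℕ) :
    f^[k] P ∈ Function.periodicPts f :=
  ((Function.bijOn_periodicPts f).iterate k).mapsTo h

lemma per_inj {f : X → X} {P Q : X} (h : P ∈ Function.periodicPts f)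
    (h' : Q ∈ Function.periodicPts f) (k : ℕ) (e : f^[k] P = f^[k] Q) : P = Q :=
  ((Function.bijOn_periodicPts f).iterate k).injOn h h' e

lemma Lv.iter_ge {f : X → X} {Y P : X} {l : ℕ} (h : Lv f Y P l) {k : ℕ} (hk : l ≤ k) :
    f^[k] Y = f^[k] P := by
  obtain ⟨m, rfl⟩ := Nat.exists_eq_add_of_le hk
  rw [add_comm, Function.iterate_add_apply, Function.iterate_add_apply, h.2.1]

lemma Lv.mem_iff {f : X → X} {Y P : X} {l : ℕ} (h : Lv f Y P l) (k : ℕ) :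
    f^[k] Y ∈ Function.periodicPts f ↔ l ≤ k := by
  constructor
  · intro hk
    by_contra hc
    exact h.2.2 k (by omega) hk
  · intro hk
    rw [h.iter_ge hk]
    exact per_iter h.1 k

lemma Lv.unique {f : X → X} {Y P P' : X} {l l' : ℕ} (h : Lv f Y P l) (h' : Lv f Y P' l') :
    P = P' ∧ l = l' := by
  have e : l = l' := by
    apply le_antisymm
    · exact (h.mem_iff l').1 ((h'.mem_iff l').2 le_rfl)
    · exact (h'.mem_iff l).1 ((h.mem_iff l).2 le_rfl)
  subst e
  exact ⟨per_inj h.1 h'.1 l (h.2.1.symm.trans h'.2.1), rfl⟩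

lemma Lv.exists {f : X → X} {Y : X} (h : ∃ m, f^[m] Y ∈ Function.periodicPts f) :
    ∃ P l, Lv f Y P l := by
  have h0 := Nat.find_spec h
  obtain ⟨P, hP, e⟩ := ((Function.bijOn_periodicPts f).iterate (Nat.find h)).surjOn h0
  exact ⟨P, Nat.find h, hP, e.symm, fun m hm => Nat.find_min h hm⟩

lemma Lv.fwd {f : X → X} {Y P : X} {l : ℕ} (h : Lv f Y P l) (k : ℕ) :
    Lv f (f^[k] Y) (f^[k] P) (l - k) := by
  refine ⟨per_iter h.1 k, ?_, ?_⟩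
  · rw [← Function.iterate_add_apply, ← Function.iterate_add_apply]
    exact h.iter_ge (by omega)
  · intro m hm
    rw [← Function.iterate_add_apply]
    exact h.2.2 _ (by omega)

lemma Lv.child {f : X → X} {Y P c : X} {l : ℕ} (h : Lv f Y P l) (hl : 1 ≤ l) (hc : f c = Y) :
    ∃ P', Lv f c P' (l + 1) ∧ f P' = P := by
  obtain ⟨P', hP', e⟩ := (Function.bijOn_periodicPts f).surjOn h.1
  refine ⟨P', ⟨hP', ?_, ?_⟩, e⟩
  · rw [Function.iterate_succ_apply, Function.iterate_succ_apply, hc, e, h.2.1]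
  · intro m hm hmem
    rcases m with _ | m
    · have : f c ∈ Function.periodicPts f := per_iter (f := f) hmem 1
      rw [hc] at this
      exact h.2.2 0 (by omega) this
    · rw [Function.iterate_succ_apply, hc] at hmem
      exact h.2.2 m (by omega) hmem

lemma sort_split (Z : Finset X) (e : X → ℝ) (n : ℕ) (h : n ≤ Z.card) :
    ∃ A ⊆ Z, A.card = n ∧ ∀ a ∈ A, ∀ b ∈ Z \ A, e a ≤ e b := by
  induction n with
  | zero => exact ⟨∅, by simp, rfl, by simp⟩
  | succ n ih =>
    obtain ⟨A, hA, hc, hs⟩ := ih (by omega)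
    have hne : (Z \ A).Nonempty := by
      rw [← Finset.card_pos, Finset.card_sdiff_of_subset hA]; omega
    obtain ⟨m, hm, hmin⟩ := Finset.exists_min_image (Z \ A) e hne
    rw [Finset.mem_sdiff] at hm
    refine ⟨insert m A, ?_, ?_, ?_⟩
    · intro x hx
      rcases Finset.mem_insert.1 hx with rfl | hx
      · exact hm.1
      · exact hA hx
    · rw [Finset.card_insert_of_notMem hm.2, hc]
    · intro a ha b hb
      have hb' : b ∈ Z \ A := by
        rw [Finset.mem_sdiff] at hb ⊢
        exact ⟨hb.1, fun h => hb.2 (Finset.mem_insert_of_mem h)⟩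
      rcases Finset.mem_insert.1 ha with rfl | ha
      · exact hmin b hb'
      · exact hs a ha b hb'

variable {f : X → X} {D : X → X → ℝ} {N : ℕ}

lemma TailSys.F2 (h : TailSys f D N) {Y P Q : X} {l : ℕ} (hY : Lv f Y P l) (hl : 1 ≤ l)
    (hQ : Q ∈ Function.periodicPts f) (hne : Q ≠ P) : D Q Y ≤ 0 := by
  obtain ⟨m, hm, em⟩ := hY.1
  obtain ⟨n, hn, en⟩ := hQ
  have hk : l ≤ m * n * l := Nat.le_mul_of_pos_left l (Nat.mul_pos hm hn)
  have eP : f^[m * n * l] P = P := (em.mul_const n).mul_const l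
  have eQ : f^[m * n * l] Q = Q := (en.const_mul m).mul_const l
  have eY : f^[m * n * l] Y = P := by rw [hY.iter_ge hk, eP]
  have hYP : Y ≠ P := by
    rintro rfl
    exact hY.2.2 0 (by omega) hY.1
  have := h.F1 (m * n * l) {Y, P} P Q (by
    intro x hx
    rcases Finset.mem_insert.1 hx with rfl | hx
    · exact eY
    · rw [Finset.mem_singleton.1 hx]; exact eP) (by rw [eQ]; exact hne)
  rw [Finset.sum_pair hYP, eQ] at this
  rw [h.sym Q Y]
  linarith

lemma TailSys.T1 (h : TailSys f D N) (A : Finset X) (hA : ∀ a ∈ A, a ∈ Function.periodicPts f)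
    (cA : 2 * N ≤ A.card) (B : Finset X) (hB : ∀ b ∈ B, ∃ P l, Lv f b P l ∧ 1 ≤ l) :
    B.card < 2 * N := by
  by_contra hc
  obtain ⟨A1, hA1, c1⟩ := Finset.exists_subset_card_eq (show N ≤ A.card by omega)
  have c2 : N ≤ (A \ A1).card := by rw [Finset.card_sdiff_of_subset hA1]; omega
  have hs := Finset.card_filter_add_card_filter_not (s := B) (fun b => ∃ P l, Lv f b P l ∧ 1 ≤ l ∧ P ∈ A1)
  have key : ∀ A' B' : Finset X, A' ⊆ A → B' ⊆ B → N ≤ A'.card → N ≤ B'.card →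
      (∀ b ∈ B', ∀ P l, Lv f b P l → P ∉ A') → False := by
    intro A' B' hA' hB' k1 k2 hno
    refine h.L3 A' B' ?_ k1 k2 0 ?_ (Or.inl le_rfl)
    · rw [Finset.disjoint_left]
      intro a ha ha'
      obtain ⟨P, l, hl, h1⟩ := hB a (hB' ha')
      exact hl.2.2 0 (by omega) (hA a (hA' ha))
    · intro b hb
      obtain ⟨P, l, hl, h1⟩ := hB b (hB' hb)
      apply Finset.sum_nonpos
      intro a ha
      exact h.F2 hl h1 (hA a (hA' ha)) (fun e => hno b hb P l hl (e ▸ ha))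
  by_cases hbig : N ≤ (B.filter (fun b => ∃ P l, Lv f b P l ∧ 1 ≤ l ∧ P ∈ A1)).card
  · refine key (A \ A1) _ Finset.sdiff_subset (Finset.filter_subset _ _) c2 hbig ?_
    intro b hb P l hl hP
    obtain ⟨-, P', l', hl', -, hP'⟩ := Finset.mem_filter.1 hb
    rw [(hl.unique hl').1] at hP
    exact (Finset.mem_sdiff.1 hP).2 hP'
  · refine key A1 _ hA1 (Finset.filter_subset _ _) c1.ge
      (show N ≤ (B.filter (fun b => ¬ ∃ P l, Lv f b P l ∧ 1 ≤ l ∧ P ∈ A1)).card by omega) ?_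
    intro b hb P l hl hP
    obtain ⟨hb1, hb2⟩ := Finset.mem_filter.1 hb
    obtain ⟨P', l', hl', h1⟩ := hB b hb1
    apply hb2
    refine ⟨P', l', hl', h1, ?_⟩
    rwa [← (hl.unique hl').1]

lemma TailSys.T2 (h : TailSys f D N) (P : X) (hP : f P ≠ P) (G : Finset X)
    (hG : ∀ y ∈ G, (∃ l, Lv f y P l ∧ 1 ≤ l) ∧ ∃ c, f c = y) : G.card < 2 * N := by
  by_contra hc
  have hN := h.hN
  have hl : ∀ y, ∃ l, y ∈ G → Lv f y P l ∧ 1 ≤ l := fun y => by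
    by_cases hy : y ∈ G
    · obtain ⟨l, hl⟩ := (hG y hy).1
      exact ⟨l, fun _ => hl⟩
    · exact ⟨0, fun h => absurd h hy⟩
  choose lev hlev using hl
  have hch : ∀ y, ∃ c, y ∈ G → f c = y := fun y => by
    by_cases hy : y ∈ G
    · obtain ⟨c, hc⟩ := (hG y hy).2
      exact ⟨c, fun _ => hc⟩
    · exact ⟨y, fun h => absurd h hy⟩
  choose ch hch using hch
  obtain ⟨A, hA, cA, hs⟩ := sort_split G (fun y => (lev y : ℝ)) N (by omega)
  obtain ⟨a0, ha0, hmax⟩ := Finset.exists_max_image A lev (Finset.card_pos.1 (by omega))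
  have hP0 : P ∈ Function.periodicPts f := (hlev a0 (hA ha0)).1.1
  set k := lev a0
  have hB : ∀ y ∈ G \ A, k ≤ lev y := fun y hy => by exact_mod_cast hs a0 ha0 y hy
  have hG' : ∀ y ∈ G \ A, y ∈ G := fun y hy => (Finset.mem_sdiff.1 hy).1
  have hinj : Set.InjOn ch (G \ A : Finset X) := by
    intro y hy y' hy' e
    rw [← hch y (hG' y hy), ← hch y' (hG' y' hy'), e]
  have hBL : ∀ b ∈ (G \ A).image ch, ∃ P' l, Lv f b P' l ∧ k + 1 ≤ l ∧ f P' = P := by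
    intro b hb
    obtain ⟨y, hy, rfl⟩ := Finset.mem_image.1 hb
    obtain ⟨h1, h2⟩ := hlev y (hG' y hy)
    obtain ⟨P', h3, h4⟩ := h1.child h2 (hch y (hG' y hy))
    exact ⟨P', _, h3, by have := hB y hy; omega, h4⟩
  refine h.L3 A ((G \ A).image ch) ?_ cA.ge ?_ 0 ?_ (Or.inl le_rfl)
  · rw [Finset.disjoint_left]
    intro a ha hb
    obtain ⟨P', l, h1, -, h2⟩ := hBL a hb
    rw [((hlev a (hA ha)).1.unique h1).1] at hP
    rw [((hlev a (hA ha)).1.unique h1).1] at h2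
    exact hP h2
  · rw [Finset.card_image_of_injOn hinj, Finset.card_sdiff_of_subset hA]; omega
  · intro b hb
    obtain ⟨P', l, h1, h2, h3⟩ := hBL b hb
    have hPP : P' ≠ P := by rintro rfl; exact hP h3
    refine (h.F1 k A (f^[k] P) b ?_ ?_).trans ?_
    · intro a ha
      exact (hlev a (hA ha)).1.iter_ge (hmax a ha)
    · intro e
      have := per_iter hP0 k
      rw [← e, h1.mem_iff] at this
      omega
    · refine h.F2 (h1.fwd k) (by omega) (per_iter hP0 k) ?_
      intro e
      exact hPP (per_inj h1.1 hP0 k e.symm)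

end tails

section tails2
variable {X : Type*} {f : X → X} {D : X → X → ℝ} {N : ℕ}

lemma Lv.ne_fix {Y P : X} {l : ℕ} (hY : Lv f Y P l) {k : ℕ} (hk : k < l) : f^[k] Y ≠ P := by
  intro e
  exact hY.2.2 k hk (e ▸ hY.1)

lemma TailSys.E1 (h : TailSys f D N) {P Y : X} (hP : f P = P) {l : ℕ} (hY : Lv f Y P l)
    (hl : 2 ≤ l) (S : Finset X) (hS : ∀ x ∈ S, f x = P ∧ x ≠ P) :
    D P Y + ∑ x ∈ S, D x Y ≤ D P (f Y) := by
  have h1 : P ∉ S := fun hm => (hS P hm).2 rfl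
  have := h.F1 1 (insert P S) P Y (by
    intro x hx
    rcases Finset.mem_insert.1 hx with rfl | hx
    · exact hP
    · exact (hS x hx).1) (hY.ne_fix (by omega))
  rwa [Finset.sum_insert h1] at this

lemma TailSys.E2 (h : TailSys f D N) {P Y : X} (hP : f P = P) {l : ℕ} (hY : Lv f Y P l)
    {k : ℕ} (hk : k < l) : D P Y ≤ D P (f^[k] Y) := by
  have := h.F1 k {P} P Y (by
    intro x hx; rw [Finset.mem_singleton.1 hx]; exact Function.iterate_fixed hP k)
    (hY.ne_fix hk)
  simpa using this

lemma Lv.top_fix {Y P : X} (hP : f P = P) {l : ℕ} (hY : Lv f Y P l) : f^[l] Y = P := by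
  rw [hY.2.1]; exact Function.iterate_fixed hP l

lemma TailSys.E3 (h : TailSys f D N) {P Y : X} (hP : f P = P) {l : ℕ} (hY : Lv f Y P l)
    (hl : 2 ≤ l) : 2 * D P Y ≤ D P (f Y) := by
  have hQ : f (f^[l - 1] Y) = P := by
    rw [← Function.iterate_succ_apply' f, Nat.succ_eq_add_one, Nat.sub_add_cancel (by omega)]
    exact hY.top_fix hP
  have hne := hY.ne_fix (show l - 1 < l by omega)
  have h1 := h.E1 hP hY hl {f^[l - 1] Y} (by
    intro x hx; rw [Finset.mem_singleton.1 hx]; exact ⟨hQ, hne⟩)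
  have h2 := h.U (l - 1) P Y hP hne (by
    intro e
    rw [e] at hQ
    exact hY.ne_fix (show 1 < l by omega) hQ)
  rw [Finset.sum_singleton, h.sym (f^[l - 1] Y) Y] at h1
  rw [h.sym Y P] at h2
  linarith

lemma choose_child (G : Finset X) (hG : ∀ y ∈ G, ∃ c, f c = y) :
    ∃ ch : X → X, ∀ y ∈ G, f (ch y) = y := by
  have hch : ∀ y, ∃ c, y ∈ G → f c = y := fun y => by
    by_cases hy : y ∈ G
    · obtain ⟨c, hc⟩ := hG y hy
      exact ⟨c, fun _ => hc⟩
    · exact ⟨y, fun h => absurd h hy⟩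
  choose ch hch using hch
  exact ⟨ch, hch⟩

lemma TailSys.S1 (h : TailSys f D N) (P : X) (hP : f P = P) (G : Finset X)
    (hG : ∀ y ∈ G, Lv f y P 1 ∧ ∃ c, f c = y) : G.card < 4 * N := by
  by_contra hc
  have hN := h.hN
  obtain ⟨ch, hch⟩ := choose_child G (fun y hy => (hG y hy).2)
  obtain ⟨L0, hL, cL, hs⟩ := sort_split G (fun y => D P y) (2 * N) (by omega)
  have cA0 : 2 * N ≤ (G \ L0).card := by
    rw [Finset.card_sdiff_of_subset hL]; omega
  obtain ⟨A, hA, cA⟩ := Finset.exists_subset_card_eq cA0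
  obtain ⟨a0, ha0, hmin⟩ := Finset.exists_min_image A (fun y => D P y)
    (Finset.card_pos.1 (by omega))
  have hAG : ∀ a ∈ A, a ∈ G := fun a ha => (Finset.mem_sdiff.1 (hA ha)).1
  obtain ⟨H, hH⟩ : ∃ H, H = D P a0 := ⟨_, rfl⟩
  have hAH : ∀ a ∈ A, H ≤ D P a := fun a ha => hH ▸ hmin a ha
  have hLH : ∀ y ∈ L0, D P y ≤ H := fun y hy => hH ▸ hs y hy a0 (hA ha0)
  have hAS : ∀ a ∈ A, f a = P ∧ a ≠ P := fun a ha =>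
    ⟨(hG a (hAG a ha)).1.top_fix hP, (hG a (hAG a ha)).1.ne_fix (k := 0) (by omega)⟩
  have hinj : Set.InjOn ch (L0 : Finset X) := by
    intro y hy y' hy' e
    rw [← hch y (hL hy), ← hch y' (hL hy'), e]
  obtain ⟨B, hBdef⟩ : ∃ B, B = L0.image ch := ⟨_, rfl⟩
  have cB : B.card = 2 * N := by rw [hBdef, Finset.card_image_of_injOn hinj, cL]
  have hBL : ∀ b ∈ B, Lv f b P 2 ∧ D P (f b) ≤ H := by
    intro b hb
    rw [hBdef] at hb
    obtain ⟨y, hy, rfl⟩ := Finset.mem_image.1 hb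
    obtain ⟨P', h3, h4⟩ := (hG y (hL hy)).1.child le_rfl (hch y (hL hy))
    have : P' = P := per_inj h3.1 (hG y (hL hy)).1.1 1 (by simpa [hP] using h4)
    subst this
    exact ⟨h3, by rw [hch y (hL hy)]; exact hLH y hy⟩
  have hdis : Disjoint A B := by
    rw [Finset.disjoint_left]
    intro a ha hb
    have := ((hG a (hAG a ha)).1.unique (hBL a hb).1).2
    omega
  have hne : ∀ a ∈ A, ∀ b ∈ B, a ≠ b := fun a ha b hb e =>
    Finset.disjoint_left.1 hdis ha (e ▸ hb)
  have hPB : ∀ b ∈ B, P ≠ b := fun b hb e =>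
    (hBL b hb).1.ne_fix (k := 0) (by omega) e.symm
  have hsum : ∀ b ∈ B, ∑ a ∈ A, D a b ≤ H := by
    intro b hb
    have h1 := h.E1 hP (hBL b hb).1 le_rfl A hAS
    have h2 := h.nn P b (hPB b hb)
    linarith [(hBL b hb).2]
  by_cases hH0 : H ≤ 0
  · exact h.L3 A B hdis (by omega) (by omega) H hsum (Or.inl hH0)
  push Not at hH0
  obtain ⟨q, hq, hqs⟩ := exists_le_avg A (fun a => ∑ b ∈ B, D a b) (B.card * H)
    (Finset.card_pos.1 (by omega)) (by
      rw [Finset.sum_comm]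
      have := Finset.sum_le_card_nsmul B _ H hsum
      rwa [nsmul_eq_mul] at this)
  have hqs' : ∑ b ∈ B, D q b ≤ H := by
    have e : (A.card : ℝ) = B.card := by rw [cA, cB]
    have e2 : (0 : ℝ) < B.card := by rw [cB]; exact_mod_cast (by omega)
    rw [e] at hqs
    beta_reduce at hqs
    nlinarith
  have hfil := Finset.card_filter_add_card_filter_not (s := B) (fun b => D q b ≤ H / 4)
  have hbad : (B.filter (fun b => ¬ D q b ≤ H / 4)).card ≤ 4 := by
    have h1 : ((B.filter (fun b => ¬ D q b ≤ H / 4)).card : ℝ) * (H / 4) ≤ H := by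
      refine le_trans ?_ hqs'
      refine le_trans ?_ (Finset.sum_le_sum_of_subset_of_nonneg
        (Finset.filter_subset (fun b => ¬ D q b ≤ H / 4) B)
        (fun b hb _ => h.nn q b (hne q hq b hb)))
      rw [← nsmul_eq_mul]
      apply Finset.card_nsmul_le_sum
      intro b hb
      exact (not_le.1 (Finset.mem_filter.1 hb).2).le
    have h2 : ((B.filter (fun b => ¬ D q b ≤ H / 4)).card : ℝ) ≤ 4 := by
      by_contra hcc
      have hcc' := lt_of_not_ge hcc
      nlinarith
    exact_mod_cast h2
  have hsub := Finset.filter_subset (fun b => D q b ≤ H / 4) B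
  refine h.L3 A (B.filter (fun b => D q b ≤ H / 4)) (Finset.disjoint_of_subset_right hsub hdis)
    (by omega) (by omega) H (fun b hb => hsum b (hsub hb)) (Or.inr ⟨P, q, (hAS q hq).2.symm, ?_, ?_, ?_⟩)
  · intro hb; exact hPB P (hsub hb) rfl
  · intro hb; exact hne q hq q (hsub hb) rfl
  · intro b hb b' hb' _
    have h1 := h.E3 hP (hBL b (hsub hb)).1 le_rfl
    have h2 := (hBL b (hsub hb)).2
    have h3 := (Finset.mem_filter.1 hb').2
    have h4 := hAH q hq
    linarith

lemma TailSys.S2 (h : TailSys f D N) (P Q : X) (hP : f P = P) (G : Finset X)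
    (hG : ∀ y ∈ G, (∃ l, Lv f y P l ∧ 2 ≤ l ∧ f^[l - 1] y = Q) ∧ ∃ c, f c = y) :
    G.card < 2 * N := by
  by_contra hc
  have hN := h.hN
  have hl : ∀ y, ∃ l, y ∈ G → Lv f y P l ∧ 2 ≤ l ∧ f^[l - 1] y = Q := fun y => by
    by_cases hy : y ∈ G
    · obtain ⟨l, hl⟩ := (hG y hy).1
      exact ⟨l, fun _ => hl⟩
    · exact ⟨0, fun h => absurd h hy⟩
  choose lev hlev using hl
  obtain ⟨ch, hch⟩ := choose_child G (fun y hy => (hG y hy).2)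
  obtain ⟨A, hA, cA, hs⟩ := sort_split G (fun y => (lev y : ℝ)) N (by omega)
  obtain ⟨a0, ha0, hmax⟩ := Finset.exists_max_image A lev (Finset.card_pos.1 (by omega))
  have hk2 : 2 ≤ lev a0 := (hlev a0 (hA ha0)).2.1
  have hQ1 : f Q = P := by
    obtain ⟨h1, h2, h3⟩ := hlev a0 (hA ha0)
    rw [← h3, ← Function.iterate_succ_apply' f, Nat.succ_eq_add_one, Nat.sub_add_cancel (by omega)]
    exact h1.top_fix hP
  have hQL : Lv f Q P 1 := by
    obtain ⟨h1, h2, h3⟩ := hlev a0 (hA ha0)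
    have := h1.fwd (lev a0 - 1)
    rw [h3, Function.iterate_fixed hP] at this
    rwa [show lev a0 - (lev a0 - 1) = 1 by omega] at this
  have hQP : Q ≠ P := hQL.ne_fix (k := 0) (by omega)
  set k := lev a0
  have hB : ∀ y ∈ G \ A, k ≤ lev y := fun y hy => by exact_mod_cast hs a0 ha0 y hy
  have hG' : ∀ y ∈ G \ A, y ∈ G := fun y hy => (Finset.mem_sdiff.1 hy).1
  have hinj : Set.InjOn ch (G \ A : Finset X) := by
    intro y hy y' hy' e
    rw [← hch y (hG' y hy), ← hch y' (hG' y' hy'), e]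
  have hBL : ∀ b ∈ (G \ A).image ch, ∃ l, Lv f b P l ∧ k + 1 ≤ l ∧ f^[l - 1] b = Q := by
    intro b hb
    obtain ⟨y, hy, rfl⟩ := Finset.mem_image.1 hb
    obtain ⟨h1, h2, h5⟩ := hlev y (hG' y hy)
    obtain ⟨P', h3, h4⟩ := h1.child (by omega) (hch y (hG' y hy))
    have : P' = P := per_inj h3.1 h1.1 1 (by simpa [hP] using h4)
    subst this
    refine ⟨_, h3, by have := hB y hy; omega, ?_⟩
    rw [← h5, Nat.add_sub_cancel]
    conv_lhs => rw [show lev y = (lev y - 1) + 1 by omega, Function.iterate_succ_apply,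
      hch y (hG' y hy)]
  -- bound of E along the orbit
  have hE : ∀ b ∈ (G \ A).image ch, ∀ l, Lv f b P l → ∀ j, j < l →
      D P (f^[j] b) ≤ D P Q := by
    intro b hb l hl j hj
    obtain ⟨l', h1, h2, h3⟩ := hBL b hb
    have e := (hl.unique h1).2
    subst e
    have := h.E2 hP (Function.iterate_fixed hP j ▸ hl.fwd j) (k := l - j - 1) (by omega)
    rw [← Function.iterate_add_apply, show l - j - 1 + j = l - 1 by omega, h3] at this
    exact this
  refine h.L3 A ((G \ A).image ch) ?_ cA.ge ?_ (D P Q) ?_ (Or.inr ⟨P, Q, hQP.symm, ?_, ?_, ?_⟩)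
  · rw [Finset.disjoint_left]
    intro a ha hb
    obtain ⟨l, h1, h2, -⟩ := hBL a hb
    have e := ((hlev a (hA ha)).1.unique h1).2
    have := hmax a ha
    omega
  · rw [Finset.card_image_of_injOn hinj, Finset.card_sdiff_of_subset hA]; omega
  · intro b hb
    obtain ⟨l, h1, h2, h3⟩ := hBL b hb
    refine (h.F1 k A P b ?_ (h1.ne_fix (by omega))).trans (hE b hb l h1 k (by omega))
    intro a ha
    rw [(hlev a (hA ha)).1.iter_ge (hmax a ha)]
    exact Function.iterate_fixed hP k
  · intro hb
    obtain ⟨l, h1, h2, -⟩ := hBL P hb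
    exact h1.ne_fix (k := 0) (by omega) rfl
  · intro hb
    obtain ⟨l, h1, h2, -⟩ := hBL Q hb
    have := (h1.unique hQL).2
    omega
  · intro b hb b' hb' _
    have hb2 : ∀ b ∈ (G \ A).image ch, b ≠ P ∧ 2 * D P b ≤ D P (f b) ∧ 2 * D P (f b) ≤ D P Q ∧
        D Q b ≤ D P (f b) - D P b := by
      intro b hb
      obtain ⟨l, h1, h2, h3⟩ := hBL b hb
      refine ⟨h1.ne_fix (k := 0) (by omega), h.E3 hP h1 (by omega), ?_, ?_⟩
      · have e1 := h.E3 hP (Function.iterate_fixed hP 1 ▸ h1.fwd 1) (by omega)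
        exact e1.trans (hE b hb l h1 2 (by omega))
      · have := h.E1 hP h1 (by omega) {Q} (by
          intro x hx; rw [Finset.mem_singleton.1 hx]; exact ⟨hQ1, hQP⟩)
        rw [Finset.sum_singleton] at this
        linarith
    obtain ⟨_, x1, x2, _⟩ := hb2 b hb
    obtain ⟨y0, y1, y2, y3⟩ := hb2 b' hb'
    have := h.nn P b' y0.symm
    linarith

lemma TailSys.count (h : TailSys f D N)
    (hper : ∀ A : Finset X, (∀ a ∈ A, a ∈ Function.periodicPts f) → A.card ≤ 2 * N)
    (V : Finset X) (hV : ∀ y ∈ V, (∃ m, f^[m] y ∈ Function.periodicPts f) ∧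
      y ∉ Function.periodicPts f ∧ ∃ c, f c = y) :
    V.card ≤ (4 * N + 2 * N * (4 * N)) * (2 * N) := by
  have hl : ∀ y, ∃ P l, y ∈ V → Lv f y P l ∧ 1 ≤ l := fun y => by
    by_cases hy : y ∈ V
    · obtain ⟨P, l, hl⟩ := Lv.exists (hV y hy).1
      refine ⟨P, l, fun _ => ⟨hl, ?_⟩⟩
      by_contra hc
      exact (hV y hy).2.1 ((hl.mem_iff 0).2 (by omega))
    · exact ⟨y, 0, fun h => absurd h hy⟩
  choose sh lev hsl using hl
  refine (Finset.card_le_mul_card_image (f := sh) V _ ?_).trans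
    (Nat.mul_le_mul_left _ (hper (V.image sh) ?_))
  · intro P _
    by_cases hP : f P = P
    · set W := V.filter (fun y => sh y = P) with hW
      have hWm : ∀ y ∈ W, y ∈ V ∧ Lv f y P (lev y) ∧ 1 ≤ lev y := by
        intro y hy
        obtain ⟨h1, h2⟩ := Finset.mem_filter.1 hy
        have := hsl y h1
        rw [h2] at this
        exact ⟨h1, this⟩
      have hs := Finset.card_filter_add_card_filter_not (s := W) (fun y => lev y = 1)
      have c1 : (W.filter (fun y => lev y = 1)).card < 4 * N := by
        apply h.S1 P hP
        intro y hy
        obtain ⟨h1, h2⟩ := Finset.mem_filter.1 hy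
        obtain ⟨h3, h4, -⟩ := hWm y h1
        exact ⟨h2 ▸ h4, (hV y h3).2.2⟩
      have c2 : (W.filter (fun y => ¬ lev y = 1)).card ≤ 2 * N * (4 * N) := by
        refine (Finset.card_le_mul_card_image (f := fun y => f^[lev y - 1] y) _ (2 * N) ?_).trans
          (Nat.mul_le_mul_left _ ?_)
        · intro Q _
          apply le_of_lt
          apply h.S2 P Q hP
          intro y hy
          obtain ⟨h1, h2⟩ := Finset.mem_filter.1 hy
          obtain ⟨h3, h4⟩ := Finset.mem_filter.1 h1
          obtain ⟨h5, h6, h7⟩ := hWm y h3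
          exact ⟨⟨lev y, h6, by omega, h2⟩, (hV y h5).2.2⟩
        · apply le_of_lt
          apply h.S1 P hP
          intro Q hQ
          obtain ⟨y, hy, rfl⟩ := Finset.mem_image.1 hQ
          obtain ⟨h3, h4⟩ := Finset.mem_filter.1 hy
          obtain ⟨h5, h6, h7⟩ := hWm y h3
          constructor
          · have := h6.fwd (lev y - 1)
            rwa [Function.iterate_fixed hP, show lev y - (lev y - 1) = 1 by omega] at this
          · refine ⟨f^[lev y - 2] y, ?_⟩
            rw [← Function.iterate_succ_apply' f]
            congr 2; omega
      omega
    · have := h.T2 P hP (V.filter (fun y => sh y = P)) (by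
        intro y hy
        obtain ⟨h1, h2⟩ := Finset.mem_filter.1 hy
        have h3 := hsl y h1
        rw [h2] at h3
        exact ⟨⟨_, h3⟩, (hV y h1).2.2⟩)
      omega
  · intro P hP
    obtain ⟨y, hy, rfl⟩ := Finset.mem_image.1 hP
    exact (hsl y hy).1.1

end tails2

noncomputable section
variable {K : Type*} [Field K] [NumberField K] {d : ℕ}

/-- dehomogenization -/
def dehom (F : MvPolynomial (Fin 2) K) : Polynomial K :=
  ∑ m ∈ F.support, Polynomial.C (F.coeff m) * Polynomial.X ^ (m 0)

lemma hom_deg {F : MvPolynomial (Fin 2) K} (hF : F.IsHomogeneous d) {m : Fin 2 →₀ ℕ}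
    (hm : m ∈ F.support) : m 0 + m 1 = d := by
  have := hF (mem_support_iff.1 hm)
  rw [Finsupp.weight_apply, Finsupp.sum_fintype _ _ (by simp)] at this
  simpa [Fin.sum_univ_two] using this

lemma eval_vec (F : MvPolynomial (Fin 2) K) (x y : K) :
    eval ![x, y] F = ∑ m ∈ F.support, F.coeff m * (x ^ (m 0) * y ^ (m 1)) := by
  rw [eval_eq']
  apply Finset.sum_congr rfl
  intro m _
  simp [Fin.prod_univ_two]

lemma aeval_dehom (F : MvPolynomial (Fin 2) K) (t : AlgebraicClosure K) :
    Polynomial.aeval t (dehom F) = aeval ![t, 1] F := by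
  rw [aeval_def, eval₂_eq', dehom, map_sum]
  apply Finset.sum_congr rfl
  intro m _
  simp [Fin.prod_univ_two]

lemma eval_dehom {F : MvPolynomial (Fin 2) K} (hF : F.IsHomogeneous d) {x y : K} (hy : y ≠ 0) :
    eval ![x, y] F = y ^ d * (dehom F).eval (x / y) := by
  rw [eval_vec, dehom, Polynomial.eval_finsetSum, Finset.mul_sum]
  apply Finset.sum_congr rfl
  intro m hm
  have := hom_deg hF hm
  simp only [Polynomial.eval_mul, Polynomial.eval_C, Polynomial.eval_pow, Polynomial.eval_X]
  rw [← this, pow_add, div_pow]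
  field_simp

lemma dehom_natDegree {F : MvPolynomial (Fin 2) K} (hF : F.IsHomogeneous d) :
    (dehom F).natDegree ≤ d := by
  rw [dehom]
  apply Polynomial.natDegree_sum_le_of_forall_le
  intro m hm
  have := hom_deg hF hm
  exact (Polynomial.natDegree_C_mul_X_pow_le _ _).trans (by omega)

lemma dehom_coeff {F : MvPolynomial (Fin 2) K} (hF : F.IsHomogeneous d) :
    (dehom F).coeff d = eval ![1, 0] F := by
  rw [eval_vec, dehom, Polynomial.finsetSum_coeff]
  apply Finset.sum_congr rfl
  intro m hm
  have := hom_deg hF hm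
  rw [Polynomial.coeff_C_mul, Polynomial.coeff_X_pow]
  by_cases h : m 1 = 0
  · rw [if_pos (by omega), h]; simp
  · rw [if_neg (by omega), zero_pow h]; simp

lemma dehom_coprime (φ : P1Map K d) : IsCoprime (dehom φ.F) (dehom φ.G) := by
  refine (Polynomial.isCoprime_iff_aeval_ne_zero_of_isAlgClosed (k := K) (AlgebraicClosure K) _ _).2 ?_
  intro t
  rw [aeval_dehom, aeval_dehom]
  by_contra hc
  push Not at hc
  exact one_ne_zero (φ.coprime t 1 hc.1 hc.2).2

lemma dehom_deg (φ : P1Map K d) (hd : 2 ≤ d) (h1 : (dehom φ.F).natDegree ≤ 1)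
    (h2 : (dehom φ.G).natDegree ≤ 1) : False := by
  have e1 := dehom_coeff φ.homF
  have e2 := dehom_coeff φ.homG
  rw [Polynomial.coeff_eq_zero_of_natDegree_lt (by omega)] at e1 e2
  have hne : (![1, 0] : Fin 2 → K) ≠ 0 := by
    intro h; have := congrFun h 0; simp at this
  apply Phi_ne φ hne
  ext i
  fin_cases i
  · simpa [Phi] using e1.symm
  · simpa [Phi] using e2.symm

lemma lin_indep (φ : P1Map K d) (hd : 2 ≤ d) (α β : Polynomial K) (hα : α.natDegree ≤ 1)
    (hβ : β.natDegree ≤ 1) (h : α * dehom φ.F + β * dehom φ.G = 0) : α = 0 ∧ β = 0 := by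
  by_contra hne
  have hc := dehom_coprime φ
  have key : ∀ (p q a b : Polynomial K), IsCoprime p q → a * p + b * q = 0 → b.natDegree ≤ 1 →
      ¬ (a = 0 ∧ b = 0) → p.natDegree ≤ 1 := by
    intro p q a b hpq e hb hab
    by_cases hb0 : b = 0
    · have ha : a ≠ 0 := fun h => hab ⟨h, hb0⟩
      rw [hb0, zero_mul, add_zero] at e
      rw [(mul_eq_zero.1 e).resolve_left ha]; simp
    · have : p ∣ b := by
        apply hpq.dvd_of_dvd_mul_right
        exact ⟨-a, by linear_combination e⟩
      exact (Polynomial.natDegree_le_of_dvd this hb0).trans hb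
  exact dehom_deg φ hd (key _ _ _ _ hc h hβ hne)
    (key _ _ _ _ hc.symm (by rw [add_comm]; exact h) hα (fun hh => hne ⟨hh.2, hh.1⟩))

lemma zeros_bound (φ : P1Map K d) (hd : 2 ≤ d) (a0 a1 b0 b1 : K)
    (hne : ¬ (a0 = 0 ∧ a1 = 0 ∧ b0 = 0 ∧ b1 = 0)) (S : Finset (P1 K))
    (hS : ∀ x ∈ S, (a0 * x.rep 0 + a1 * x.rep 1) * Phi φ x.rep 0 +
      (b0 * x.rep 0 + b1 * x.rep 1) * Phi φ x.rep 1 = 0) : S.card ≤ d + 2 := by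
  by_contra hcard
  have hc := card_drop_inf S (d + 2) (by omega)
  set α : Polynomial K := Polynomial.C a0 * Polynomial.X + Polynomial.C a1 with hα
  set β : Polynomial K := Polynomial.C b0 * Polynomial.X + Polynomial.C b1 with hβ
  have dα : α.natDegree ≤ 1 := Polynomial.natDegree_linear_le
  have dβ : β.natDegree ≤ 1 := Polynomial.natDegree_linear_le
  set ψ := α * dehom φ.F + β * dehom φ.G with hψ
  have hψ0 : ψ ≠ 0 := by
    intro h
    obtain ⟨h1, h2⟩ := lin_indep φ hd α β dα dβ h
    apply hne
    have c1 := congrArg (fun p => Polynomial.coeff p 1) h1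
    have c0 := congrArg (fun p => Polynomial.coeff p 0) h1
    have e1 := congrArg (fun p => Polynomial.coeff p 1) h2
    have e0 := congrArg (fun p => Polynomial.coeff p 0) h2
    simp [hα, hβ, Polynomial.coeff_C] at c1 c0 e1 e0
    exact ⟨c1, c0, e1, e0⟩
  have dψ : ψ.natDegree ≤ d + 1 := by
    refine Polynomial.natDegree_add_le_of_degree_le ?_ ?_
    · refine Polynomial.natDegree_mul_le.trans ?_
      have := dehom_natDegree φ.homF; omega
    · refine Polynomial.natDegree_mul_le.trans ?_
      have := dehom_natDegree φ.homG; omega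
  set S' := S.filter (fun P => P.rep 1 ≠ 0) with hS'
  have hinj : Set.InjOn (fun P : P1 K => P.rep 0 / P.rep 1) S' := by
    intro P hP Q hQ e
    have p1 := (Finset.mem_filter.1 hP).2
    have q1 := (Finset.mem_filter.1 hQ).2
    by_contra hPQ
    apply wdg_rep_ne hPQ
    simp only at e
    rw [div_eq_div_iff p1 q1] at e
    rw [wdg, e]; ring
  have hsub : (S'.image (fun P : P1 K => P.rep 0 / P.rep 1)).val ⊆ ψ.roots := by
    intro t ht
    obtain ⟨P, hP, rfl⟩ := Finset.mem_image.1 (Finset.mem_def.2 ht)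
    obtain ⟨hP1, hP2⟩ := Finset.mem_filter.1 hP
    rw [Polynomial.mem_roots hψ0, Polynomial.IsRoot]
    have h := hS P hP1
    simp only [Phi, Matrix.cons_val_zero, Matrix.cons_val_one] at h
    rw [eval_dehom φ.homF hP2, eval_dehom φ.homG hP2] at h
    have hy : P.rep 1 ^ (d + 1) ≠ 0 := pow_ne_zero _ hP2
    apply (mul_eq_zero.1 (?_ : P.rep 1 ^ (d + 1) * _ = 0)).resolve_left hy
    rw [← h]
    simp only [hψ, hα, hβ, Polynomial.eval_add, Polynomial.eval_mul, Polynomial.eval_C,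
      Polynomial.eval_X]
    rw [pow_succ]
    field_simp
  have := Polynomial.card_le_degree_of_subset_roots hsub
  rw [Finset.card_image_of_injOn hinj] at this
  omega

lemma toFun_eq_wdg (φ : P1Map K d) (x z : P1 K) (h : φ.toFun x = z) :
    wdg z.rep (Phi φ x.rep) = 0 := by
  have e := toFun_mk φ x.rep_nonzero
  rw [x.mk_rep, h] at e
  obtain ⟨c, hc, ec⟩ := rep_mk (Phi φ x.rep) (Phi_ne φ x.rep_nonzero)
  rw [← e] at ec
  rw [ec, wdg_smul_right, wdg_self, mul_zero]

lemma fibre_bound (φ : P1Map K d) (hd : 2 ≤ d) (z : P1 K) (S : Finset (P1 K))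
    (hS : ∀ x ∈ S, φ.toFun x = z) : S.card ≤ d + 2 := by
  apply zeros_bound φ hd 0 (- z.rep 1) 0 (z.rep 0)
  · rintro ⟨-, h1, -, h0⟩
    apply z.rep_nonzero
    ext i; fin_cases i
    · exact h0
    · simpa using h1
  · intro x hx
    have := toFun_eq_wdg φ x z (hS x hx)
    rw [wdg] at this
    linear_combination (x.rep 1) * this

end

noncomputable section
variable {K : Type*} [Field K] [NumberField K] {d : ℕ}

lemma no_small (T : Finset (HeightOneSpectrum (𝓞 K))) {x : K} (hx : x ≠ 0)
    (h1 : ∀ v ∉ T, HeightOneSpectrum.adicAbv K v x ≤ 1) (h2 : ∀ v : SPl K T, fPl T v x ≤ 1)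
    (h3 : ∀ v : InfinitePlace K, fPl T (Sum.inl v) x ≤ 2 / 3) : False := by
  have h := prod_formula T hx
  have hl : ellT T x ≤ 0 := by
    rw [ellT]
    have : 0 ≤ ∑ᶠ v : HeightOneSpectrum (𝓞 K),
        -(if v ∈ T then 0 else Real.log (HeightOneSpectrum.adicAbv K v x)) := by
      apply finsum_nonneg
      intro v
      split_ifs with hv
      · simp
      · have := Real.log_nonpos (AbsoluteValue.nonneg _ _) (h1 v hv)
        linarith
    rw [finsum_neg_distrib] at this
    linarith
  have hlt : ∑ v : SPl K T, (mPl T v : ℝ) * Real.log (fPl T v x) < ∑ v : SPl K T, (0 : ℝ) := by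
    obtain ⟨w⟩ := (inferInstance : Nonempty (InfinitePlace K))
    apply Finset.sum_lt_sum
    · intro v _
      have := Real.log_nonpos (AbsoluteValue.nonneg _ _) (h2 v)
      have := (mPl_bounds T v).1
      nlinarith
    · refine ⟨Sum.inl w, Finset.mem_univ _, ?_⟩
      have := Real.log_neg (AbsoluteValue.pos _ hx) ((h3 w).trans_lt (by norm_num))
      have := (mPl_bounds T (Sum.inl w)).1
      nlinarith
  rw [Finset.sum_const_zero] at hlt
  linarith

lemma close_fin (T : Finset (HeightOneSpectrum (𝓞 K))) (v : HeightOneSpectrum (𝓞 K)) {l l' : K}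
    (h1 : HeightOneSpectrum.adicAbv K v l ≤ 1)
    (h2 : HeightOneSpectrum.adicAbv K v l ≤ HeightOneSpectrum.adicAbv K v (1 - l))
    (h1' : HeightOneSpectrum.adicAbv K v l' ≤ 1) :
    HeightOneSpectrum.adicAbv K v ((l - l') / (1 - l)) ≤ 1 := by
  have e := HeightOneSpectrum.adicAbv_add_le_max K v l (1 - l)
  rw [add_sub_cancel, map_one, max_eq_right h2] at e
  rw [map_div₀, div_le_one (by linarith)]
  exact ((adic_sub v l l').trans (max_le h1 h1')).trans e

lemma close_arch (f : AbsoluteValue K ℝ) {l l' : K} (h1 : f l ≤ 1 / 4) (h1' : f l' ≤ 1 / 4) :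
    f ((l - l') / (1 - l)) ≤ 2 / 3 := by
  have e := f.add_le l (1 - l)
  rw [add_sub_cancel, map_one] at e
  have e2 := f.sub_le l 0 l'
  rw [sub_zero, zero_sub, f.map_neg] at e2
  rw [map_div₀, div_le_iff₀ (by linarith)]
  linarith

lemma close_all (T : Finset (HeightOneSpectrum (𝓞 K))) {l l' : K} (hl : l ≠ 1)
    (h1 : ∀ v, fPl T v l ≤ tPl T v) (h2 : ∀ v, fPl T v l ≤ tPl T v * fPl T v (1 - l))
    (h1' : ∀ v, fPl T v l' ≤ tPl T v)
    (hu : ∀ v ∉ T, HeightOneSpectrum.adicAbv K v ((1 - l') / (1 - l)) ≤ 1) : l = l' := by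
  by_contra hne
  have hl' : 1 - l ≠ 0 := sub_ne_zero.2 (Ne.symm hl)
  have h3 : ∀ v : InfinitePlace K, fPl T (Sum.inl v) ((l - l') / (1 - l)) ≤ 2 / 3 := fun v =>
    close_arch _ (h1 (Sum.inl v)) (h1' (Sum.inl v))
  refine no_small T (x := (l - l') / (1 - l)) (div_ne_zero (sub_ne_zero.2 hne) hl') ?_ ?_ h3
  · intro v hv
    have e : (l - l') / (1 - l) = (1 - l') / (1 - l) - 1 := by field_simp; ring
    rw [e]
    refine (adic_sub v _ _).trans (max_le (hu v hv) ?_)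
    simp
  · rintro (v | v)
    · exact (h3 v).trans (by norm_num)
    · have := h2 (Sum.inr v)
      simp only [tPl, Sum.elim_inr, one_mul] at this
      exact close_fin T v.1 (h1 (Sum.inr v)) this (h1' (Sum.inr v))

lemma plucker (a a' b b' : Fin 2 → K) :
    wdg a b * wdg a' b' - wdg a a' * wdg b b' = wdg a b' * wdg a' b := by
  simp only [wdg]; ring

lemma cross_eq (φ : P1Map K d) (T : Finset (HeightOneSpectrum (𝓞 K)))
    (h : GoodReductionOutside φ T) (A B : Finset (P1 K)) (hdisj : Disjoint A B)
    (pA : ∀ a ∈ A, a ∈ Function.periodicPts φ.toFun)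
    (pB : ∀ a ∈ B, a ∈ Function.periodicPts φ.toFun)
    (hG : ∀ v, Gauged (fPl T v) (tPl T v) (fun P : P1 K => P.rep) A B)
    (hG' : ∀ v, Gauged (fPl T v) (tPl T v) (fun P : P1 K => (φ.toFun P).rep) A B)
    {a a' b b' : P1 K} (ha : a ∈ A) (ha' : a' ∈ A) (hb : b ∈ B) (hb' : b' ∈ B) :
    wdg a.rep a'.rep * wdg b.rep b'.rep *
      (wdg (φ.toFun a).rep (φ.toFun b).rep * wdg (φ.toFun a').rep (φ.toFun b').rep) =
    wdg (φ.toFun a).rep (φ.toFun a').rep * wdg (φ.toFun b).rep (φ.toFun b').rep *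
      (wdg a.rep b.rep * wdg a'.rep b'.rep) := by
  have nAB : ∀ x ∈ A, ∀ y ∈ B, x ≠ y := fun x hx y hy e =>
    Finset.disjoint_left.1 hdisj hx (e ▸ hy)
  have wAB : ∀ x ∈ A, ∀ y ∈ B, wdg x.rep y.rep ≠ 0 := fun x hx y hy => wdg_rep_ne (nAB x hx y hy)
  have wAB' : ∀ x ∈ A, ∀ y ∈ B, wdg (φ.toFun x).rep (φ.toFun y).rep ≠ 0 := by
    intro x hx y hy
    apply wdg_rep_ne
    intro e
    exact nAB x hx y hy ((Function.bijOn_periodicPts φ.toFun).injOn (pA x hx) (pB y hy) e)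
  have key : ∀ (vec : P1 K → Fin 2 → K),
      (∀ x ∈ A, ∀ y ∈ B, wdg (vec x) (vec y) ≠ 0) →
      (∀ v, Gauged (fPl T v) (tPl T v) vec A B) → ∀ l : K,
      l = wdg (vec a) (vec a') * wdg (vec b) (vec b') / (wdg (vec a) (vec b) * wdg (vec a') (vec b')) →
      1 - l = wdg (vec a) (vec b') * wdg (vec a') (vec b) /
        (wdg (vec a) (vec b) * wdg (vec a') (vec b')) ∧
      (∀ v, fPl T v l ≤ tPl T v) ∧ (∀ v, fPl T v l ≤ tPl T v * fPl T v (1 - l)) := by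
    intro vec hw g l hl
    have w1 := hw a ha b hb
    have w2 := hw a' ha' b' hb'
    have w3 := hw a ha b' hb'
    have w4 := hw a' ha' b hb
    have e1 : 1 - l = wdg (vec a) (vec b') * wdg (vec a') (vec b) /
        (wdg (vec a) (vec b) * wdg (vec a') (vec b')) := by
      rw [hl, ← plucker (vec a) (vec a') (vec b) (vec b')]; field_simp
    refine ⟨e1, ?_, ?_⟩
    · intro v
      obtain ⟨-, -, -, -, -, -, -, -, g9⟩ := g v
      have := g9 a ha a' ha' b hb b' hb'
      rw [hl, map_div₀, div_le_iff₀ (AbsoluteValue.pos _ (mul_ne_zero w1 w2)), map_mul, map_mul]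
      exact this
    · intro v
      obtain ⟨-, -, -, -, -, -, -, -, g9⟩ := g v
      have := g9 a ha a' ha' b' hb' b hb
      rw [e1, hl, map_div₀, map_div₀, ← mul_div_assoc]
      apply div_le_div_of_nonneg_right _ (AbsoluteValue.nonneg _ _)
      rw [map_mul, map_mul]
      rw [wdg_comm (vec b') (vec b), AbsoluteValue.map_neg] at this
      exact this
  obtain ⟨e1, e2, e3⟩ := key (fun P => P.rep) wAB hG _ rfl
  obtain ⟨f1, f2, f3⟩ := key (fun P => (φ.toFun P).rep) wAB' hG' _ rfl
  have w1 := wAB a ha b hb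
  have w2 := wAB a' ha' b' hb'
  have w3 := wAB a ha b' hb'
  have w4 := wAB a' ha' b hb
  have w1' := wAB' a ha b hb
  have w2' := wAB' a' ha' b' hb'
  have w3' := wAB' a ha b' hb'
  have w4' := wAB' a' ha' b hb
  have := close_all T (fun hl => by
    rw [hl, sub_self] at e1
    exact (div_ne_zero (mul_ne_zero w3 w4) (mul_ne_zero w1 w2)) e1.symm) e2 e3 f2 (by
    intro v hv
    rw [e1, f1]
    have d1 := (dP_periodic φ v (h v hv) (pA a ha) (pB b hb) (nAB a ha b hb)).2
    have d2 := (dP_periodic φ v (h v hv) (pA a' ha') (pB b' hb') (nAB a' ha' b' hb')).2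
    have d3 := (dP_periodic φ v (h v hv) (pA a ha) (pB b' hb') (nAB a ha b' hb')).2
    have d4 := (dP_periodic φ v (h v hv) (pA a' ha') (pB b hb) (nAB a' ha' b hb)).2
    simp only [dP, dl] at d1 d2 d3 d4
    have q : ∀ x : K, x ≠ 0 → HeightOneSpectrum.adicAbv K v x ≠ 0 := fun x hx =>
      (AbsoluteValue.pos _ hx).ne'
    apply le_of_eq
    apply Real.eq_one_of_pos_of_log_eq_zero
    · apply AbsoluteValue.pos
      exact div_ne_zero (div_ne_zero (mul_ne_zero w3' w4') (mul_ne_zero w1' w2'))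
        (div_ne_zero (mul_ne_zero w3 w4) (mul_ne_zero w1 w2))
    · simp only [map_div₀, map_mul]
      have q1 := q _ w1
      have q2 := q _ w2
      have q3 := q _ w3
      have q4 := q _ w4
      have q1' := q _ w1'
      have q2' := q _ w2'
      have q3' := q _ w3'
      have q4' := q _ w4'
      rw [Real.log_div (div_ne_zero (mul_ne_zero q3' q4') (mul_ne_zero q1' q2'))
        (div_ne_zero (mul_ne_zero q3 q4) (mul_ne_zero q1 q2)),
        Real.log_div (mul_ne_zero q3' q4') (mul_ne_zero q1' q2'),
        Real.log_div (mul_ne_zero q3 q4) (mul_ne_zero q1 q2),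
        Real.log_mul q3 q4, Real.log_mul q1 q2, Real.log_mul q3' q4', Real.log_mul q1' q2']
      linarith)
  rwa [div_eq_div_iff (mul_ne_zero w1 w2) (mul_ne_zero w1' w2')] at this

lemma per_core (φ : P1Map K d) (hd : 2 ≤ d) (T : Finset (HeightOneSpectrum (𝓞 K)))
    (h : GoodReductionOutside φ T) (A B : Finset (P1 K)) (hdisj : Disjoint A B)
    (pA : ∀ a ∈ A, a ∈ Function.periodicPts φ.toFun)
    (pB : ∀ a ∈ B, a ∈ Function.periodicPts φ.toFun)
    (hG : ∀ v, Gauged (fPl T v) (tPl T v) (fun P : P1 K => P.rep) A B)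
    (hG' : ∀ v, Gauged (fPl T v) (tPl T v) (fun P : P1 K => (φ.toFun P).rep) A B)
    (cA : 2 ≤ A.card) (cB : d + 3 ≤ B.card) : False := by
  obtain ⟨a, ha, a', ha', hne⟩ := Finset.one_lt_card.1 cA
  obtain ⟨b, hb⟩ := Finset.card_pos.1 (show 0 < B.card by omega)
  have nAB : ∀ x ∈ A, ∀ y ∈ B, x ≠ y := fun x hx y hy e =>
    Finset.disjoint_left.1 hdisj hx (e ▸ hy)
  have nAB' : ∀ x ∈ A, ∀ y ∈ B, wdg (φ.toFun x).rep (φ.toFun y).rep ≠ 0 := by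
    intro x hx y hy
    apply wdg_rep_ne
    intro e
    exact nAB x hx y hy ((Function.bijOn_periodicPts φ.toFun).injOn (pA x hx) (pB y hy) e)
  have w1 := wdg_rep_ne hne
  have w2 := nAB' a ha b hb
  have w3 := nAB' a' ha' b hb
  set c1 := wdg a.rep a'.rep * wdg (φ.toFun a).rep (φ.toFun b).rep with hc1
  set c2 := wdg (φ.toFun a).rep (φ.toFun a').rep * wdg a.rep b.rep with hc2
  set p := (φ.toFun a').rep with hp
  set q := (φ.toFun b).rep with hq
  have hc : c1 ≠ 0 := mul_ne_zero w1 w2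
  have := zeros_bound φ hd (p 1 * c1 * b.rep 1 - q 1 * c2 * a'.rep 1)
    (- (p 1 * c1 * b.rep 0) + q 1 * c2 * a'.rep 0)
    (- (p 0 * c1 * b.rep 1) + q 0 * c2 * a'.rep 1)
    (p 0 * c1 * b.rep 0 - q 0 * c2 * a'.rep 0) (by
      rintro ⟨h1, h2, h3, h4⟩
      apply b.rep_nonzero
      have z1 : c1 * wdg p q * b.rep 1 = 0 := by
        rw [wdg]; linear_combination - q 0 * h1 - q 1 * h3
      have z0 : c1 * wdg p q * b.rep 0 = 0 := by
        rw [wdg]; linear_combination q 0 * h2 + q 1 * h4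
      have hcw := mul_ne_zero hc w3
      ext i; fin_cases i
      · exact (mul_eq_zero.1 z0).resolve_left hcw
      · exact (mul_eq_zero.1 z1).resolve_left hcw) B (by
      intro x hx
      have e := cross_eq φ T h A B hdisj pA pB hG hG' ha ha' hb hx
      have e' := toFun_mk φ x.rep_nonzero
      rw [x.mk_rep] at e'
      obtain ⟨k, hk, ek⟩ := rep_mk (Phi φ x.rep) (Phi_ne φ x.rep_nonzero)
      rw [← e'] at ek
      rw [ek]
      simp only [Pi.smul_apply, smul_eq_mul]
      have e2 : c1 * wdg b.rep x.rep * wdg p (φ.toFun x).rep =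
          c2 * wdg a'.rep x.rep * wdg q (φ.toFun x).rep := by
        rw [hc1, hc2]; linear_combination e
      rw [wdg, wdg, wdg, wdg] at e2
      linear_combination k * e2)
  omega

lemma per_bound (φ : P1Map K d) (hd : 2 ≤ d) (T : Finset (HeightOneSpectrum (𝓞 K)))
    (h : GoodReductionOutside φ T) (Z : Finset (P1 K))
    (hZ : ∀ a ∈ Z, a ∈ Function.periodicPts φ.toFun) :
    Z.card ≤ 2 * ((10 ^ 7) ^ sCard K T * ((10 ^ 7) ^ sCard K T * (d + 3))) + 2 := by
  by_contra hcard
  set M := (10 ^ 7) ^ sCard K T * ((10 ^ 7) ^ sCard K T * (d + 3)) with hM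
  have inj : ∀ x ∈ Z, ∀ y ∈ Z, φ.toFun x = φ.toFun y → x = y := fun x hx y hy e =>
    (Function.bijOn_periodicPts φ.toFun).injOn (hZ x hx) (hZ y hy) e
  have c1 := card_drop_inf Z (2 * M + 1) (by omega)
  set Z1 := Z.filter (fun P => P.rep 1 ≠ 0) with hZ1
  have c2 : 2 * M ≤ (Z1.filter (fun P => (φ.toFun P).rep 1 ≠ 0)).card := by
    have h1 := Finset.card_filter_add_card_filter_not (s := Z1)
      (fun P : P1 K => (φ.toFun P).rep 1 ≠ 0)
    have h2 : (Z1.filter (fun P : P1 K => ¬ (φ.toFun P).rep 1 ≠ 0)).card ≤ 1 := by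
      rw [Finset.card_le_one]
      intro a ha b hb
      simp only [Finset.mem_filter, not_not, hZ1] at ha hb
      exact inj a ha.1.1 b hb.1.1 (inf_unique ha.2 hb.2)
    omega
  set Z2 := Z1.filter (fun P => (φ.toFun P).rep 1 ≠ 0) with hZ2
  have m2 : ∀ x ∈ Z2, x ∈ Z ∧ x.rep 1 ≠ 0 ∧ (φ.toFun x).rep 1 ≠ 0 := by
    intro x hx
    simp only [hZ2, hZ1, Finset.mem_filter] at hx
    tauto
  obtain ⟨A, hA, cA⟩ := Finset.exists_subset_card_eq (show M ≤ Z2.card by omega)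
  have cB : M ≤ (Z2 \ A).card := by
    rw [Finset.card_sdiff_of_subset hA]; omega
  have hB : Z2 \ A ⊆ Z2 := Finset.sdiff_subset
  obtain ⟨A1, hA1, B1, hB1, cA1, cB1, g1⟩ := sel_all T (fun P : P1 K => P.rep) _ A (Z2 \ A)
    (fun x hx => (m2 x (hA hx)).2.1) (fun x hx => (m2 x (hB hx)).2.1)
    (fun x hx y hy e => by
      by_contra hne
      exact wdg_rep_ne hne e) (le_of_eq cA.symm) cB
  obtain ⟨A2, hA2, B2, hB2, cA2, cB2, g2⟩ := sel_all T (fun P : P1 K => (φ.toFun P).rep) _ A1 B1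
    (fun x hx => (m2 x (hA (hA1 hx))).2.2) (fun x hx => (m2 x (hB (hB1 hx))).2.2)
    (fun x hx y hy e => by
      by_contra hne
      refine wdg_rep_ne (fun e' => hne ?_) e
      exact inj x (m2 x (hA (hA1 hx))).1 y (m2 y (hA (hA1 hy))).1 e') cA1 cB1
  refine per_core φ hd T h A2 B2 ?_ ?_ ?_ (fun v => (g1 v).mono hA2 hB2) g2 (by omega) cB2
  · rw [Finset.disjoint_left]
    intro x hx hx'
    exact (Finset.mem_sdiff.1 (hB1 (hB2 hx'))).2 (hA1 (hA2 hx))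
  · exact fun x hx => hZ x (m2 x (hA (hA1 (hA2 hx)))).1
  · exact fun x hx => hZ x (m2 x (hB (hB1 (hB2 hx)))).1

end

noncomputable section
variable {K : Type*} [Field K] [NumberField K] {d : ℕ}

lemma sCard_pos (T : Finset (HeightOneSpectrum (𝓞 K))) : 1 ≤ sCard K T := by
  have : 0 < Fintype.card (InfinitePlace K) := Fintype.card_pos
  rw [sCard]; omega

lemma Nbd_le (s : ℕ) (hs : 1 ≤ s) : 8 ≤ Nbd s ∧ Nbd s ≤ (10 ^ s) ^ 11 := by
  have h10 : 10 ≤ 10 ^ s := by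
    calc 10 = 10 ^ 1 := by norm_num
      _ ≤ 10 ^ s := Nat.pow_le_pow_right (by norm_num) hs
  have hs' : s ≤ 10 ^ s := (Nat.lt_pow_self (by norm_num)).le
  have e : ((10 : ℕ) ^ 7) ^ s = (10 ^ s) ^ 7 := by rw [← pow_mul, ← pow_mul, mul_comm]
  rw [Nbd, e]
  generalize 10 ^ s = x at *
  have h7 : 1 ≤ x ^ 7 := Nat.one_le_pow _ _ (by omega)
  constructor
  · nlinarith
  · have h3 : 10 ^ 3 ≤ x ^ 3 := Nat.pow_le_pow_left h10 3
    calc x ^ 7 * (200 * s) + 1 ≤ x ^ 7 * (200 * x) + x ^ 7 * x := by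
          gcongr
          nlinarith
      _ = 201 * (x ^ 8) := by ring
      _ ≤ x ^ 3 * x ^ 8 := by gcongr; omega
      _ = x ^ 11 := by ring

lemma tailSys (φ : P1Map K d) (T : Finset (HeightOneSpectrum (𝓞 K)))
    (h : GoodReductionOutside φ T) : TailSys φ.toFun (DT T) (Nbd (sCard K T)) where
  nn := fun _ _ hxy => DT_nonneg T hxy
  sym := fun x y => DT_comm T x y
  F1 := fun k S z Y hS hY => F1_glob φ T h k S z Y hS hY
  U := fun k P Y hP h2 h3 => U_glob φ T h k P Y hP h2 h3
  L3 := fun A B hdisj cA cB H hH hpq => lem3 T A B hdisj cA cB H hH hpq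
  hN := (Nbd_le _ (sCard_pos T)).1

lemma card_main (φ : P1Map K d) (hd : 2 ≤ d) (T : Finset (HeightOneSpectrum (𝓞 K)))
    (h : GoodReductionOutside φ T) (Z : Finset (P1 K))
    (hZ : ∀ y ∈ Z, ∃ m, φ.toFun^[m] y ∈ Function.periodicPts φ.toFun) :
    Z.card ≤ (d + 2) * (10 ^ sCard K T) ^ 35 := by
  have hs := sCard_pos T
  have hsys := tailSys φ T h
  have hb := per_bound φ hd T h
  obtain ⟨n8, hN⟩ := Nbd_le _ hs
  have e : ((10 : ℕ) ^ 7) ^ sCard K T = (10 ^ sCard K T) ^ 7 := by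
    rw [← pow_mul, ← pow_mul, mul_comm]
  have h10 : 10 ≤ 10 ^ sCard K T := by
    calc 10 = 10 ^ 1 := by norm_num
      _ ≤ 10 ^ sCard K T := Nat.pow_le_pow_right (by norm_num) hs
  rw [e] at hb
  generalize Nbd (sCard K T) = N at *
  generalize 10 ^ sCard K T = x at *
  have h2 : 100 ≤ x ^ 2 := by nlinarith
  by_cases hper : ∃ A : Finset (P1 K), (∀ a ∈ A, a ∈ Function.periodicPts φ.toFun) ∧ 2 * N ≤ A.card
  · obtain ⟨A, hA, cA⟩ := hper
    have hc := Finset.card_filter_add_card_filter_not (s := Z)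
      (fun y => y ∈ Function.periodicPts φ.toFun)
    have b1 := hb (Z.filter (fun y => y ∈ Function.periodicPts φ.toFun))
      (fun a ha => (Finset.mem_filter.1 ha).2)
    have b2 := hsys.T1 A hA cA (Z.filter (fun y => ¬ y ∈ Function.periodicPts φ.toFun)) (by
      intro b hb
      obtain ⟨hb1, hb2⟩ := Finset.mem_filter.1 hb
      obtain ⟨P, l, hl⟩ := Lv.exists (hZ b hb1)
      refine ⟨P, l, hl, ?_⟩
      by_contra hl0
      exact hb2 ((hl.mem_iff 0).2 (by omega)))
    have x35 : 100 * x ^ 33 ≤ x ^ 35 := by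
      calc 100 * x ^ 33 ≤ x ^ 2 * x ^ 33 := by gcongr
        _ = x ^ 35 := by ring
    have x14 : x ^ 14 ≤ x ^ 33 := Nat.pow_le_pow_right (by omega) (by norm_num)
    have x11 : x ^ 11 ≤ x ^ 33 := Nat.pow_le_pow_right (by omega) (by norm_num)
    have x1 : 1 ≤ x ^ 33 := Nat.one_le_pow _ _ (by omega)
    have e2 : x ^ 7 * (x ^ 7 * (d + 3)) = x ^ 14 * (d + 3) := by ring
    rw [e2] at b1
    have e3 : x ^ 14 * (d + 3) ≤ x ^ 33 * (d + 3) := by gcongr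
    have e4 : (d + 2) * (100 * x ^ 33) ≤ (d + 2) * x ^ 35 := by gcongr
    refine le_trans ?_ e4
    nlinarith
  · push Not at hper
    have hper' : ∀ A : Finset (P1 K), (∀ a ∈ A, a ∈ Function.periodicPts φ.toFun) →
      A.card ≤ 2 * N := fun A hA => (hper A hA).le
    set I := Z.image φ.toFun with hI
    have hc := Finset.card_filter_add_card_filter_not (s := I)
      (fun y => y ∈ Function.periodicPts φ.toFun)
    have b1 := hper' (I.filter (fun y => y ∈ Function.periodicPts φ.toFun))
      (fun a ha => (Finset.mem_filter.1 ha).2)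
    have b2 := hsys.count hper' (I.filter (fun y => ¬ y ∈ Function.periodicPts φ.toFun)) (by
      intro y hy
      obtain ⟨hy1, hy2⟩ := Finset.mem_filter.1 hy
      obtain ⟨z, hz, rfl⟩ := Finset.mem_image.1 hy1
      refine ⟨?_, hy2, z, rfl⟩
      obtain ⟨m, hm⟩ := hZ z hz
      refine ⟨m, ?_⟩
      rw [← Function.iterate_succ_apply, Function.iterate_succ_apply']
      exact (Function.bijOn_periodicPts φ.toFun).mapsTo hm)
    have b3 : Z.card ≤ (d + 2) * I.card := by
      apply Finset.card_le_mul_card_image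
      intro z _
      exact fibre_bound φ hd z _ (fun x hx => (Finset.mem_filter.1 hx).2)
    refine b3.trans (Nat.mul_le_mul_left _ ?_)
    have n1 : N ≤ N ^ 3 := Nat.le_self_pow (by norm_num) _
    have n2 : N ^ 2 ≤ N ^ 3 := Nat.pow_le_pow_right (by omega) (by norm_num)
    calc I.card ≤ 2 * N + (4 * N + 2 * N * (4 * N)) * (2 * N) := by omega
      _ = 2 * N + 8 * N ^ 2 + 16 * N ^ 3 := by ring
      _ ≤ 100 * N ^ 3 := by omega
      _ ≤ x ^ 2 * (x ^ 11) ^ 3 := by gcongr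
      _ = x ^ 35 := by ring

lemma num_bound (s d n : ℕ) (hs : 1 ≤ s) (hd : 2 ≤ d) (hn : n ≤ (d + 2) * (10 ^ s) ^ 35) :
    (n : ℝ) ≤ max ((12 * 7 ^ (4 * s) : ℝ) + CVconst d s) (3 * (L1const d s : ℝ) + 3) := by
  by_cases hW : d + 2 ≤ (10 ^ s) ^ 35
  · refine le_max_of_le_left ?_
    have h1 : n ≤ 10 ^ (70 * s) := by
      calc n ≤ (10 ^ s) ^ 35 * (10 ^ s) ^ 35 := hn.trans (by gcongr)
        _ = 10 ^ (70 * s) := by rw [← pow_mul, ← pow_add]; congr 1; ring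
    have h2 : ((10 : ℝ)) ^ (70 * s) ≤ Cconst 5 s := by
      have h3 : (10 : ℝ) ≤ Real.exp 3 := by
        have := Real.exp_one_gt_d9
        have e : Real.exp 3 = Real.exp 1 ^ 3 := by rw [← Real.exp_nat_mul]; norm_num
        rw [e]
        calc (10 : ℝ) ≤ 2.7 ^ 3 := by norm_num
          _ ≤ _ := by gcongr; linarith
      calc (10 : ℝ) ^ (70 * s) ≤ Real.exp 3 ^ (70 * s) := by gcongr
        _ = Real.exp ((70 * s : ℕ) * 3) := by rw [← Real.exp_nat_mul]
        _ ≤ Cconst 5 s := by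
          rw [Cconst]
          apply Real.exp_le_exp.2
          have hs' : (1 : ℝ) ≤ s := by exact_mod_cast hs
          push_cast
          norm_num
          nlinarith
    have h4 : (n : ℝ) ≤ 10 ^ (70 * s) := by exact_mod_cast h1
    have h5 : (0 : ℝ) ≤ 12 * 7 ^ (4 * s) := by positivity
    have h6 : (0 : ℝ) ≤ (3 * (Bconst s : ℝ) + 13) * d := by positivity
    have h7 : (0 : ℝ) ≤ Bconst s := by positivity
    have h8 : (0 : ℝ) ≤ Cconst 3 s := (Real.exp_pos _).le
    rw [CVconst]
    linarith
  · refine le_max_of_le_right ?_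
    have h1 : n ≤ (d + 2) * (d + 2) := hn.trans (Nat.mul_le_mul_left _ (by omega))
    have hB : 2 ^ 16 ≤ Bconst s := Nat.pow_le_pow_right (by norm_num) (by omega)
    have h2 : (d + 2) * (d + 2) ≤ 3 * L1const d s + 3 := by
      obtain ⟨e, rfl⟩ := Nat.exists_eq_add_of_le hd
      rw [L1const, show 2 + e - 1 = e + 1 by omega]
      have : (e + 1) * (1 + (2 + e) * 16) ≤ (e + 1) * (1 + (2 + e) * (1 + Bconst s)) := by
        gcongr; omega
      nlinarith
    exact_mod_cast h1.trans h2

end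

/-- **Theorem (quadratic bound on preperiodic points).**
If `φ : ℙ¹ → ℙ¹` of degree `d ≥ 2` is defined over a number field `K` and has good reduction
outside a finite set `S` of places of `K` containing all archimedean ones, then
`|PrePer(φ,K)| ≤ max{T(|S|) + CV(d,|S|), 3·L₁(d,|S|) + 3}`, a quadratic polynomial in `d`
whose coefficients depend only on `|S|`. -/
theorem preper_bound_quadratic
    {K : Type*} [Field K] [NumberField K]
    (T : Finset (HeightOneSpectrum (𝓞 K))) {d : ℕ} (hd : 2 ≤ d)
    (φ : P1Map K d) (hgr : GoodReductionOutside φ T) :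
    {P : P1 K | IsPreperiodicPoint φ P}.Finite ∧
      ({P : P1 K | IsPreperiodicPoint φ P}.ncard : ℝ) ≤
        max ((12 * 7 ^ (4 * sCard K T) : ℝ) + CVconst d (sCard K T))
          (3 * (L1const d (sCard K T) : ℝ) + 3) := by
  have hmain : ∀ Z : Finset (P1 K), (Z : Set (P1 K)) ⊆ {P : P1 K | IsPreperiodicPoint φ P} →
      Z.card ≤ (d + 2) * (10 ^ sCard K T) ^ 35 :=
    fun Z hZ => card_main φ hd T hgr Z (fun y hy => hZ hy)
  have hfin : {P : P1 K | IsPreperiodicPoint φ P}.Finite := by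
    by_contra hinf
    obtain ⟨Z, hZ, hc⟩ := Set.Infinite.exists_subset_card_eq hinf
      ((d + 2) * (10 ^ sCard K T) ^ 35 + 1)
    have := hmain Z hZ
    omega
  refine ⟨hfin, ?_⟩
  rw [Set.ncard_eq_toFinset_card _ hfin]
  exact num_bound _ d _ (sCard_pos T) hd (hmain _ (by simp))
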